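/- Consider the classical risk model where the claim amounts have distribution F_X(u) = Σ_{i=1}^n p_i F_{α_i,β_i}(u), a finite mixture of Gamma(α_i, β_i) distributions with weights p_i > 0 summing to 1, shape parameters α_i ≥ 1 and scale parameters β_i > 0; set μ := Σ_{i=1}^n p_i α_i/β_i. Let 0 < φ < 1 and let ψ be the locally bounded solution of ψ(u) = φ ( ∫₀^u ψ(u−y) (1−F_X(y))/μ dy + ∫_u^∞ (1−F_X(y))/μ dy ), u ≥ 0 (the ruin probability). Then ψ is continuous on [0,∞), four times continuously differentiable on (0,∞), and sup_{u>0} |ψ''(u)| < ∞, sup_{u>0} |u ψ'''(u)| < ∞, sup_{u>0} |u² ψ^{(4)}(u)| < ∞ (i.e. ψ ∈ D₁); consequently, for every t > 0, sup_{u ≥ 0} |M_t^{[2]} ψ(u) − ψ(u)| ≤ (1/(8t²)) sup|ψ''| + (1/(6t²)) sup|u ψ'''(u)| + (9/(16t²)) sup|u² ψ^{(4)}(u)| < ∞. -/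

import Mathlib

open MeasureTheory Filter Topology
open scoped ENNReal

/-- The distribution function of a `Gamma(a, b)` random variable
(`a` shape, `b` rate): `∫₀^u b^a y^{a-1} e^{-by} / Γ(a) dy`. -/
noncomputable def gammaCDF (a b : ℝ) (u : ℝ) : ℝ :=
  ∫ y in (0:ℝ)..u, b ^ a * y ^ (a - 1) * Real.exp (-b * y) / Real.Gamma a

/-- The gamma-type operator `L_t* g(u) = E[g(S(⌊tu⌋+1)/t)]
= ∫₀^∞ g(x) t^{⌊tu⌋+1} x^{⌊tu⌋} e^{-tx}/⌊tu⌋! dx`. -/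
noncomputable def Lstar (t : ℝ) (g : ℝ → ℝ) (u : ℝ) : ℝ :=
  ∫ x in Set.Ioi (0:ℝ),
    g x * (t ^ (⌊t * u⌋₊ + 1) * x ^ ⌊t * u⌋₊ * Real.exp (-t * x)
      / ((⌊t * u⌋₊).factorial : ℝ))

/-- The accelerated approximation on the grid `{k/t : k ∈ ℕ}`. -/
noncomputable def Mgrid (t : ℝ) (g : ℝ → ℝ) : ℕ → ℝ
  | 0 => g 0
  | k + 1 => 2 * Lstar (2 * t) g ((2 * (k : ℝ) + 1) / (2 * t))
      - Lstar t g ((k : ℝ) / t)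

/-- The accelerated approximation `M_t^{[2]} g`, extended from the grid by linear
interpolation (the formula reproduces the grid values when `tu ∈ ℕ`). -/
noncomputable def Mt2 (t : ℝ) (g : ℝ → ℝ) (u : ℝ) : ℝ :=
  (t * u - (⌊t * u⌋₊ : ℝ)) * Mgrid t g (⌊t * u⌋₊ + 1)
    + ((⌊t * u⌋₊ : ℝ) + 1 - t * u) * Mgrid t g ⌊t * u⌋₊

/-! ### Part A: the approximation operator -/

lemma aux_mono {f f' : ℝ → ℝ} {κ : ℝ} (hκ : 0 < κ) (hd : ∀ x, 0 < x → HasDerivAt f (f' x) x)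
    (h0 : f κ = 0) (hpos : ∀ x, 0 < x → 0 ≤ f' x) (x : ℝ) (hx : 0 < x) : 0 ≤ (x - κ) * f x := by
  have hm : MonotoneOn f (Set.Ioi 0) := by
    apply monotoneOn_of_deriv_nonneg (convex_Ioi 0)
    · exact fun y hy => (hd y hy).continuousAt.continuousWithinAt
    · intro y hy
      rw [interior_Ioi] at hy
      exact (hd y hy).differentiableAt.differentiableWithinAt
    · intro y hy
      rw [interior_Ioi] at hy
      rw [(hd y hy).deriv]; exact hpos y hy
  rcases le_total x κ with h | h
  · have := hm hx hκ h
    nlinarith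
  · have := hm hκ hx h
    nlinarith

lemma aux_valley {f f' : ℝ → ℝ} {κ : ℝ} (hκ : 0 < κ) (hd : ∀ x, 0 < x → HasDerivAt f (f' x) x)
    (h0 : f κ = 0) (hpos : ∀ x, 0 < x → 0 ≤ (x - κ) * f' x) (x : ℝ) (hx : 0 < x) : 0 ≤ f x := by
  rcases le_total x κ with h | h
  · have hm : AntitoneOn f (Set.Icc x κ) := by
      apply antitoneOn_of_deriv_nonpos (convex_Icc _ _)
      · exact fun y hy => (hd y (by linarith [hy.1])).continuousAt.continuousWithinAt
      · intro y hy
        rw [interior_Icc] at hy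
        exact (hd y (by linarith [hy.1])).differentiableAt.differentiableWithinAt
      · intro y hy
        rw [interior_Icc] at hy
        have hy0 : 0 < y := by linarith [hy.1]
        rw [(hd y hy0).deriv]
        have := hpos y hy0
        by_contra hc
        push Not at hc
        nlinarith [hy.2]
    have := hm (Set.left_mem_Icc.2 h) (Set.right_mem_Icc.2 h) h
    linarith
  · have hm : MonotoneOn f (Set.Icc κ x) := by
      apply monotoneOn_of_deriv_nonneg (convex_Icc _ _)
      · exact fun y hy => (hd y (by linarith [hy.1])).continuousAt.continuousWithinAt
      · intro y hy
        rw [interior_Icc] at hy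
        exact (hd y (by linarith [hy.1])).differentiableAt.differentiableWithinAt
      · intro y hy
        rw [interior_Icc] at hy
        have hy0 : 0 < y := by linarith [hy.1]
        rw [(hd y hy0).deriv]
        have := hpos y hy0
        by_contra hc
        push Not at hc
        nlinarith [hy.1]
    have := hm (Set.left_mem_Icc.2 h) (Set.right_mem_Icc.2 h) h
    linarith

lemma aux_four {D D1 D2 D3 D4 : ℝ → ℝ} {κ : ℝ} (hκ : 0 < κ)
    (h1 : ∀ x, 0 < x → HasDerivAt D (D1 x) x) (h2 : ∀ x, 0 < x → HasDerivAt D1 (D2 x) x)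
    (h3 : ∀ x, 0 < x → HasDerivAt D2 (D3 x) x) (h4 : ∀ x, 0 < x → HasDerivAt D3 (D4 x) x)
    (e0 : D κ = 0) (e1 : D1 κ = 0) (e2 : D2 κ = 0) (e3 : D3 κ = 0)
    (hp : ∀ x, 0 < x → 0 ≤ D4 x) (x : ℝ) (hx : 0 < x) : 0 ≤ D x := by
  have a3 := aux_mono hκ h4 e3 hp
  have a2 := aux_valley hκ h3 e2 a3
  have a1 := aux_mono hκ h2 e1 a2
  exact aux_valley hκ h1 e0 a1 x hx

noncomputable def hh0 (κ x : ℝ) : ℝ :=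
  -(x ^ 2 / 2) * (Real.log x - Real.log κ) + κ * (x - κ) / 2 + 3 / 4 * (x - κ) ^ 2
    + (x - κ) ^ 3 / (6 * κ)
noncomputable def hh1 (κ x : ℝ) : ℝ :=
  - x * (Real.log x - Real.log κ) - x / 2 + κ / 2 + 3 / 2 * (x - κ) + (x - κ) ^ 2 / (2 * κ)
noncomputable def hh2 (κ x : ℝ) : ℝ :=
  - (Real.log x - Real.log κ) + (x - κ) / κ
noncomputable def hh3 (κ x : ℝ) : ℝ := - (1 / x) + 1 / κ

lemma hh0_d {κ x : ℝ} (hκ : 0 < κ) (hx : 0 < x) : HasDerivAt (hh0 κ) (hh1 κ x) x := by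
  have hl := (Real.hasDerivAt_log hx.ne').sub_const (Real.log κ)
  have hz := (hasDerivAt_id x).sub_const κ
  have := ((((((hasDerivAt_id x).pow 2).div_const 2).neg.mul hl).add
    ((hz.const_mul κ).div_const 2)).add ((hz.pow 2).const_mul (3/4))).add
    ((hz.pow 3).div_const (6 * κ))
  refine this.congr_deriv ?_
  simp [hh1]
  field_simp
  ring

lemma hh1_d {κ x : ℝ} (hκ : 0 < κ) (hx : 0 < x) : HasDerivAt (hh1 κ) (hh2 κ x) x := by
  have hl := (Real.hasDerivAt_log hx.ne').sub_const (Real.log κ)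
  have hz := (hasDerivAt_id x).sub_const κ
  have := ((((((hasDerivAt_id x).neg.mul hl).sub ((hasDerivAt_id x).div_const 2)).add_const
    (κ/2)).add (hz.const_mul (3/2))).add ((hz.pow 2).div_const (2 * κ)))
  refine this.congr_deriv ?_
  simp [hh2]
  field_simp
  ring

lemma hh2_d {κ x : ℝ} (hx : 0 < x) : HasDerivAt (hh2 κ) (hh3 κ x) x := by
  have hl := (Real.hasDerivAt_log hx.ne').sub_const (Real.log κ)
  have hz := (hasDerivAt_id x).sub_const κ
  have := hl.neg.add (hz.div_const κ)
  refine this.congr_deriv ?_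
  simp [hh3]

lemma hh3_d {κ x : ℝ} (hx : 0 < x) : HasDerivAt (hh3 κ) (1 / x ^ 2) x := by
  have := ((hasDerivAt_inv hx.ne').neg).add_const (1/κ)
  refine (this.congr_deriv ?_).congr_of_eventuallyEq ?_
  · simp
  · exact Eventually.of_forall (fun y => by simp [hh3])

lemma taylor_h {g d1 d2 d3 d4 : ℝ → ℝ} {M4 κ : ℝ} (hκ : 0 < κ)
    (h1 : ∀ x, 0 < x → HasDerivAt g (d1 x) x) (h2 : ∀ x, 0 < x → HasDerivAt d1 (d2 x) x)
    (h3 : ∀ x, 0 < x → HasDerivAt d2 (d3 x) x) (h4 : ∀ x, 0 < x → HasDerivAt d3 (d4 x) x)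
    (hM : ∀ x, 0 < x → |x ^ 2 * d4 x| ≤ M4) (σ : ℝ) (hσ : |σ| = 1) (x : ℝ) (hx : 0 < x) :
    0 ≤ M4 * hh0 κ x + σ * (g x - (g κ + d1 κ * (x - κ) + d2 κ / 2 * (x - κ) ^ 2
      + d3 κ / 6 * (x - κ) ^ 3)) := by
  have hz : ∀ y : ℝ, HasDerivAt (fun x : ℝ => x - κ) 1 y := fun y => (hasDerivAt_id y).sub_const κ
  refine aux_four (D := fun x => M4 * hh0 κ x + σ * (g x - (g κ + d1 κ * (x - κ)
      + d2 κ / 2 * (x - κ) ^ 2 + d3 κ / 6 * (x - κ) ^ 3)))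
    (D1 := fun x => M4 * hh1 κ x + σ * (d1 x - (d1 κ + d2 κ * (x - κ) + d3 κ / 2 * (x - κ) ^ 2)))
    (D2 := fun x => M4 * hh2 κ x + σ * (d2 x - (d2 κ + d3 κ * (x - κ))))
    (D3 := fun x => M4 * hh3 κ x + σ * (d3 x - d3 κ))
    (D4 := fun x => M4 * (1 / x ^ 2) + σ * d4 x) hκ ?_ ?_ ?_ ?_ ?_ ?_ ?_ ?_ ?_ x hx
  · intro y hy
    refine (((hh0_d hκ hy).const_mul M4).add (((h1 y hy).sub ((((hz y).const_mul (d1 κ)).const_add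
      (g κ)).add (((hz y).pow 2).const_mul (d2 κ / 2)) |>.add
      (((hz y).pow 3).const_mul (d3 κ / 6)))).const_mul σ)).congr_deriv ?_
    simp; left; ring
  · intro y hy
    refine (((hh1_d hκ hy).const_mul M4).add (((h2 y hy).sub ((((hz y).const_mul (d2 κ)).const_add
      (d1 κ)).add (((hz y).pow 2).const_mul (d3 κ / 2)))).const_mul σ)).congr_deriv ?_
    simp; left; ring
  · intro y hy
    refine (((hh2_d hy).const_mul M4).add (((h3 y hy).sub ((((hz y).const_mul (d3 κ)).const_add
      (d2 κ)))).const_mul σ)).congr_deriv ?_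
    simp
  · intro y hy
    exact (((hh3_d hy).const_mul M4).add (((h4 y hy).sub_const (d3 κ)).const_mul σ))
  · simp [hh0]
  · simp [hh1]
  · simp [hh2]
  · simp [hh3]
  · intro y hy
    have h := hM y hy
    have hy2 : 0 < y ^ 2 := by positivity
    have h5 : |σ * (y ^ 2 * d4 y)| ≤ M4 := by rw [abs_mul, hσ, one_mul]; exact h
    have h6 := (abs_le.1 h5).1
    have : M4 * (1 / y ^ 2) + σ * d4 y = (M4 + σ * (y ^ 2 * d4 y)) / y ^ 2 := by
      field_simp
    rw [this]
    apply div_nonneg _ hy2.le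
    linarith

lemma hh0_le1 {κ x : ℝ} (hκ : 0 < κ) (hx : 0 < x) :
    hh0 κ x ≤ (x - κ) ^ 4 / (12 * κ ^ 2) := by
  let Φ : ℝ → ℝ := fun x => (Real.log x - Real.log κ) + 2 * ((x - κ) ^ 4 / (12 * κ ^ 2)
      - κ * (x - κ) / 2 - 3 / 4 * (x - κ) ^ 2 - (x - κ) ^ 3 / (6 * κ)) / x ^ 2
  have key : 0 ≤ Φ x := by
    refine aux_valley (f := Φ) (f' := fun x => (x - κ) ^ 3 / (3 * κ ^ 2 * x ^ 2)) hκ ?_ ?_ ?_ x hx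
    · intro y hy
      have hl := (Real.hasDerivAt_log hy.ne').sub_const (Real.log κ)
      have hz := (hasDerivAt_id y).sub_const κ
      refine (hl.add ((((((hz.pow 4).div_const (12 * κ ^ 2)).sub ((hz.const_mul κ).div_const 2)).sub
        ((hz.pow 2).const_mul (3 / 4))).sub ((hz.pow 3).div_const (6 * κ))).const_mul 2 |>.div
          ((hasDerivAt_id y).pow 2) (by simp; exact hy.ne'))).congr_deriv ?_
      simp
      field_simp
      ring
    · simp [Φ]
    · intro y hy
      rw [show (y - κ) * ((y - κ) ^ 3 / (3 * κ ^ 2 * y ^ 2))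
        = ((y - κ) ^ 2) ^ 2 / (3 * κ ^ 2 * y ^ 2) by ring]
      positivity
  have h2 := mul_nonneg (by positivity : 0 ≤ x ^ 2 / 2) key
  have e : x ^ 2 / 2 * Φ x
      = (x - κ) ^ 4 / (12 * κ ^ 2) - hh0 κ x := by
    simp only [hh0, Φ]; field_simp; ring
  rw [e] at h2; linarith

lemma hh0_le2 {κ x : ℝ} (hκ : 0 < κ) (hx : 0 < x) :
    hh0 κ x ≤ (x - κ) ^ 2 / 20 + (x - κ) ^ 4 / (30 * κ ^ 2) := by
  let Φ : ℝ → ℝ := fun x => (Real.log x - Real.log κ) + 2 * ((x - κ) ^ 2 / 20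
      + (x - κ) ^ 4 / (30 * κ ^ 2)
      - κ * (x - κ) / 2 - 3 / 4 * (x - κ) ^ 2 - (x - κ) ^ 3 / (6 * κ)) / x ^ 2
  have key : 0 ≤ Φ x := by
    refine aux_valley (f := Φ) (f' := fun y => (y - κ) * (2 * (y - κ) ^ 2 - 3 * κ * (y - κ) + 3 * κ ^ 2)
      / (15 * κ ^ 2 * y ^ 2)) hκ ?_ ?_ ?_ x hx
    · intro y hy
      have hl := (Real.hasDerivAt_log hy.ne').sub_const (Real.log κ)
      have hz := (hasDerivAt_id y).sub_const κ
      refine (hl.add (((((((hz.pow 2).div_const 20).add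
        ((hz.pow 4).div_const (30 * κ ^ 2))).sub ((hz.const_mul κ).div_const 2)).sub
        ((hz.pow 2).const_mul (3 / 4))).sub ((hz.pow 3).div_const (6 * κ))).const_mul 2 |>.div
          ((hasDerivAt_id y).pow 2) (by simp; exact hy.ne'))).congr_deriv ?_
      simp
      field_simp
      ring
    · simp [Φ]
    · intro y hy
      rw [← mul_div_assoc, ← mul_assoc]
      apply div_nonneg _ (by positivity)
      apply mul_nonneg (mul_self_nonneg _)
      nlinarith [sq_nonneg ((y - κ) - κ), sq_nonneg (y-κ), sq_nonneg κ]
  have h2 := mul_nonneg (by positivity : 0 ≤ x ^ 2 / 2) key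
  have e : x ^ 2 / 2 * Φ x
      = (x - κ) ^ 2 / 20 + (x - κ) ^ 4 / (30 * κ ^ 2) - hh0 κ x := by
    simp only [hh0, Φ]; field_simp; ring
  rw [e] at h2; linarith

lemma taylor_poly {g d1 d2 d3 d4 : ℝ → ℝ} {M4 κ : ℝ} (hκ : 0 < κ)
    (h1 : ∀ x, 0 < x → HasDerivAt g (d1 x) x) (h2 : ∀ x, 0 < x → HasDerivAt d1 (d2 x) x)
    (h3 : ∀ x, 0 < x → HasDerivAt d2 (d3 x) x) (h4 : ∀ x, 0 < x → HasDerivAt d3 (d4 x) x)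
    (hM : ∀ x, 0 < x → |x ^ 2 * d4 x| ≤ M4) (x : ℝ) (hx : 0 < x) :
    |g x - (g κ + d1 κ * (x - κ) + d2 κ / 2 * (x - κ) ^ 2 + d3 κ / 6 * (x - κ) ^ 3)|
      ≤ M4 * hh0 κ x := by
  have hp := taylor_h hκ h1 h2 h3 h4 hM 1 (by simp) x hx
  have hm := taylor_h hκ h1 h2 h3 h4 hM (-1) (by simp) x hx
  rw [abs_le]
  constructor <;> linarith

/-- gamma density -/
noncomputable def Wd (m : ℕ) (s x : ℝ) : ℝ :=
  s ^ (m + 1) * x ^ m * Real.exp (-s * x) / (m.factorial : ℝ)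

lemma Wd_nonneg (m : ℕ) {s x : ℝ} (hs : 0 < s) (hx : 0 < x) : 0 ≤ Wd m s x := by
  unfold Wd; positivity

lemma Wd_mom_int (m j : ℕ) {s : ℝ} (hs : 0 < s) :
    IntegrableOn (fun x => x ^ j * Wd m s x) (Set.Ioi 0) := by
  have h := integrableOn_rpow_mul_exp_neg_mul_rpow (p := 1) (s := ((m + j : ℕ) : ℝ)) (b := s)
    (by have : (0:ℝ) ≤ ((m + j : ℕ) : ℝ) := by positivity
        linarith) (by norm_num) hs
  have h' := h.const_mul (s ^ (m + 1) / (m.factorial : ℝ))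
  refine IntegrableOn.congr_fun (s := Set.Ioi 0) h' (fun x hx => ?_) measurableSet_Ioi
  simp only [Wd, Real.rpow_natCast, Real.rpow_one]
  ring

lemma Wd_mom (m j : ℕ) {s : ℝ} (hs : 0 < s) :
    ∫ x in Set.Ioi 0, x ^ j * Wd m s x = ((m + j).factorial : ℝ) / ((m.factorial : ℝ) * s ^ j) := by
  have h := Real.integral_rpow_mul_exp_neg_mul_Ioi (a := ((m + j : ℕ) : ℝ) + 1) (r := s)
    (by positivity) hs
  rw [Real.Gamma_nat_eq_factorial] at h
  have : ∫ x in Set.Ioi 0, x ^ j * Wd m s x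
      = ∫ x in Set.Ioi 0, (s ^ (m + 1) / (m.factorial : ℝ)) *
        (x ^ (((m + j : ℕ) : ℝ) + 1 - 1) * Real.exp (-(s * x))) := by
    refine setIntegral_congr_fun measurableSet_Ioi (fun x hx => ?_)
    simp only [Wd, add_sub_cancel_right, Real.rpow_natCast]
    rw [neg_mul]
    ring
  rw [this, integral_const_mul, h]
  rw [show ((m + j : ℕ) : ℝ) + 1 = ((m + j + 1 : ℕ) : ℝ) by push_cast; ring, Real.rpow_natCast, one_div, inv_pow]
  have := hs.ne'
  field_simp
  ring

lemma Wd_poly (m : ℕ) {s : ℝ} (hs : 0 < s) (A B C D E : ℝ) :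
    IntegrableOn (fun x => (A + B * x + C * x ^ 2 + D * x ^ 3 + E * x ^ 4) * Wd m s x) (Set.Ioi 0) ∧
    ∫ x in Set.Ioi 0, (A + B * x + C * x ^ 2 + D * x ^ 3 + E * x ^ 4) * Wd m s x
      = A + B * ((m + 1) / s) + C * ((m + 1) * (m + 2) / s ^ 2)
        + D * ((m + 1) * (m + 2) * (m + 3) / s ^ 3)
        + E * ((m + 1) * (m + 2) * (m + 3) * (m + 4) / s ^ 4) := by
  have i (j : ℕ) (c : ℝ) := (Wd_mom_int m j hs).const_mul c
  have I (j : ℕ) := Wd_mom m j hs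
  have hf : (m.factorial : ℝ) ≠ 0 := by positivity
  have e : (fun x => (A + B * x + C * x ^ 2 + D * x ^ 3 + E * x ^ 4) * Wd m s x)
    = fun x => ((((A * (x ^ 0 * Wd m s x) + B * (x ^ 1 * Wd m s x)) + C * (x ^ 2 * Wd m s x))
      + D * (x ^ 3 * Wd m s x)) + E * (x ^ 4 * Wd m s x)) := by
    funext x; ring
  rw [e]
  have i1 := (i 0 A).add (i 1 B)
  have i2 := i1.add (i 2 C)
  have i3 := i2.add (i 3 D)
  refine ⟨i3.add (i 4 E), ?_⟩
  have r4 := integral_add i3 (i 4 E)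
  have r3 := integral_add i2 (i 3 D)
  have r2 := integral_add i1 (i 2 C)
  have r1 := integral_add (i 0 A) (i 1 B)
  simp only [Pi.add_apply] at r1 r2 r3 r4
  rw [r4, r3, r2, r1]
  simp only [integral_const_mul, I]
  have hs' := hs.ne'
  simp only [Nat.factorial_succ, Nat.add_succ, Nat.add_zero, Nat.factorial]
  push_cast
  field_simp
  ring

lemma gamma_exp (m : ℕ) {s : ℝ} (hs : 0 < s) {g : ℝ → ℝ} (hg : ContinuousOn g (Set.Ioi 0))
    {κ c0 c1 c2 c3 α γ : ℝ} (hκ : κ = (m + 1) / s)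
    (hb : ∀ x, 0 < x → |g x - (c0 + c1 * (x - κ) + c2 * (x - κ) ^ 2 + c3 * (x - κ) ^ 3)|
      ≤ α * (x - κ) ^ 2 + γ * (x - κ) ^ 4) :
    |(∫ x in Set.Ioi 0, g x * Wd m s x)
      - (c0 + c2 * ((m + 1) / s ^ 2) + c3 * (2 * (m + 1) / s ^ 3))|
      ≤ α * ((m + 1) / s ^ 2) + γ * ((3 * (m + 1) ^ 2 + 6 * (m + 1)) / s ^ 4) := by
  have hs' := hs.ne'
  obtain ⟨iT, eT⟩ := Wd_poly m hs (c0 - c1 * κ + c2 * κ ^ 2 - c3 * κ ^ 3)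
    (c1 - 2 * c2 * κ + 3 * c3 * κ ^ 2) (c2 - 3 * c3 * κ) c3 0
  obtain ⟨iP, eP⟩ := Wd_poly m hs (α * κ ^ 2 + γ * κ ^ 4) (- 2 * α * κ - 4 * γ * κ ^ 3)
    (α + 6 * γ * κ ^ 2) (-4 * γ * κ) γ
  have hW : ContinuousOn (Wd m s) (Set.Ioi 0) := by
    unfold Wd; fun_prop
  have iR : IntegrableOn (fun x => (g x - (c0 + c1 * (x - κ) + c2 * (x - κ) ^ 2
      + c3 * (x - κ) ^ 3)) * Wd m s x) (Set.Ioi 0) := by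
    refine Integrable.mono' iP ?_ ?_
    · exact ContinuousOn.aestronglyMeasurable (by fun_prop) measurableSet_Ioi
    · refine (ae_restrict_mem measurableSet_Ioi).mono (fun x hx => ?_)
      rw [Real.norm_eq_abs, abs_mul, abs_of_nonneg (Wd_nonneg m hs hx)]
      refine (mul_le_mul_of_nonneg_right (hb x hx) (Wd_nonneg m hs hx)).trans (le_of_eq ?_)
      ring
  have e : ∫ x in Set.Ioi 0, g x * Wd m s x = (∫ x in Set.Ioi 0, (g x - (c0 + c1 * (x - κ)
      + c2 * (x - κ) ^ 2 + c3 * (x - κ) ^ 3)) * Wd m s x)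
      + (c0 + c2 * ((m + 1) / s ^ 2) + c3 * (2 * (m + 1) / s ^ 3)) := by
    have r := integral_add iR iT
    rw [eT] at r
    have : (c0 + c2 * ((m + 1) / s ^ 2) + c3 * (2 * (m + 1) / s ^ 3))
      = (c0 - c1 * κ + c2 * κ ^ 2 - c3 * κ ^ 3 + (c1 - 2 * c2 * κ + 3 * c3 * κ ^ 2) * ((m + 1) / s) +
            (c2 - 3 * c3 * κ) * ((m + 1) * (m + 2) / s ^ 2) +
          c3 * ((m + 1) * (m + 2) * (m + 3) / s ^ 3) +
        0 * ((m + 1) * (m + 2) * (m + 3) * (m + 4) / s ^ 4)) := by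
      rw [hκ]; field_simp; ring
    rw [this, ← r]
    congr 1
    funext x
    ring
  rw [e, add_sub_cancel_right]
  have h1 : |∫ x in Set.Ioi 0, (g x - (c0 + c1 * (x - κ)
      + c2 * (x - κ) ^ 2 + c3 * (x - κ) ^ 3)) * Wd m s x| ≤ ∫ x in Set.Ioi 0,
      (α * κ ^ 2 + γ * κ ^ 4 + (-2 * α * κ - 4 * γ * κ ^ 3) * x + (α + 6 * γ * κ ^ 2) * x ^ 2
        + (-4 * γ * κ) * x ^ 3 + γ * x ^ 4) * Wd m s x := by
    rw [← Real.norm_eq_abs]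
    refine norm_integral_le_of_norm_le iP ?_
    refine (ae_restrict_mem measurableSet_Ioi).mono (fun x hx => ?_)
    rw [Real.norm_eq_abs, abs_mul, abs_of_nonneg (Wd_nonneg m hs hx)]
    refine (mul_le_mul_of_nonneg_right (hb x hx) (Wd_nonneg m hs hx)).trans (le_of_eq ?_)
    ring
  refine h1.trans (le_of_eq ?_)
  rw [eP, hκ]
  field_simp
  ring

lemma Lstar_eq (K : ℕ) {t u : ℝ} (g : ℝ → ℝ) (h : t * u = K) :
    Lstar t g u = ∫ x in Set.Ioi 0, g x * Wd K t x := by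
  unfold Lstar Wd
  rw [h, Nat.floor_natCast]

lemma grid_bound {g d1 d2 d3 d4 : ℝ → ℝ} {M3 M4 t : ℝ} (ht : 0 < t)
    (h1 : ∀ x, 0 < x → HasDerivAt g (d1 x) x) (h2 : ∀ x, 0 < x → HasDerivAt d1 (d2 x) x)
    (h3 : ∀ x, 0 < x → HasDerivAt d2 (d3 x) x) (h4 : ∀ x, 0 < x → HasDerivAt d3 (d4 x) x)
    (hM3 : ∀ x, 0 < x → |x * d3 x| ≤ M3)
    (hM : ∀ x, 0 < x → |x ^ 2 * d4 x| ≤ M4) (k : ℕ) :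
    |Mgrid t g k - g (k / t)| ≤ M3 / (6 * t ^ 2) + 9 * M4 / (16 * t ^ 2) := by
  have hM30 : 0 ≤ M3 := (abs_nonneg _).trans (hM3 1 one_pos)
  have hM40 : 0 ≤ M4 := (abs_nonneg _).trans (hM 1 one_pos)
  rcases k with _ | K
  · simp [Mgrid]; positivity
  have ht' := ht.ne'
  have hK : (0:ℝ) ≤ K := by positivity
  simp only [Mgrid]
  rw [Lstar_eq (2 * K + 1) g (by push_cast; field_simp), Lstar_eq K g (by field_simp)]
  set κ : ℝ := ((K + 1 : ℕ) : ℝ) / t with hκd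
  have hκe : κ = ((K : ℝ) + 1) / t := by rw [hκd]; push_cast; rfl
  have hκ : 0 < κ := by rw [hκe]; positivity
  have hg : ContinuousOn g (Set.Ioi 0) := fun x hx => (h1 x hx).continuousAt.continuousWithinAt
  have hc3 : |d3 κ / 6 * ((K + 1) / t ^ 3)| ≤ M3 / (6 * t ^ 2) := by
    have := hM3 κ hκ
    rw [show d3 κ / 6 * ((K + 1) / t ^ 3) = (κ * d3 κ) / (6 * t ^ 2) by rw [hκe]; field_simp,
      abs_div, abs_of_pos (by positivity : 0 < 6 * t ^ 2)]
    gcongr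
  have main : ∀ α γ : ℝ, (∀ x, 0 < x → hh0 κ x ≤ α * (x - κ) ^ 2 + γ / κ ^ 2 * (x - κ) ^ 4) →
      2 * α * (K + 1) + γ * (9 / 2 + 15 / 2 / (K + 1)) ≤ 9 / 16 →
      |2 * (∫ x in Set.Ioi 0, g x * Wd (2 * K + 1) (2 * t) x)
        - (∫ x in Set.Ioi 0, g x * Wd K t x) - g κ|
      ≤ M3 / (6 * t ^ 2) + 9 * M4 / (16 * t ^ 2) := by
    intro α γ hh hn
    have hb : ∀ x, 0 < x → |g x - (g κ + d1 κ * (x - κ) + d2 κ / 2 * (x - κ) ^ 2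
        + d3 κ / 6 * (x - κ) ^ 3)| ≤ (M4 * α) * (x - κ) ^ 2 + (M4 * (γ / κ ^ 2)) * (x - κ) ^ 4 := by
      intro x hx
      refine (taylor_poly hκ h1 h2 h3 h4 hM x hx).trans ?_
      refine (mul_le_mul_of_nonneg_left (hh x hx) hM40).trans (le_of_eq (by ring))
    have r1 := gamma_exp K ht hg hκe hb
    have r2 := gamma_exp (2 * K + 1) (by positivity : 0 < 2 * t) hg
      (by rw [hκe]; push_cast; field_simp; ring) hb
    set I1 := ∫ x in Set.Ioi 0, g x * Wd K t x
    set I2 := ∫ x in Set.Ioi 0, g x * Wd (2 * K + 1) (2 * t) x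
    have eB : 2 * (M4 * α * ((((2 * K + 1 : ℕ) : ℝ) + 1) / (2 * t) ^ 2) + M4 * (γ / κ ^ 2) *
        ((3 * (((2 * K + 1 : ℕ) : ℝ) + 1) ^ 2 + 6 * (((2 * K + 1 : ℕ) : ℝ) + 1)) / (2 * t) ^ 4))
        + (M4 * α * ((K + 1) / t ^ 2) + M4 * (γ / κ ^ 2) * ((3 * (K + 1) ^ 2 + 6 * (K + 1)) / t ^ 4))
        = M4 / t ^ 2 * (2 * α * (K + 1) + γ * (9 / 2 + 15 / 2 / (K + 1))) := by
      rw [hκe]; push_cast; field_simp; ring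
    have hB : M4 / t ^ 2 * (2 * α * (K + 1) + γ * (9 / 2 + 15 / 2 / (K + 1)))
        ≤ 9 * M4 / (16 * t ^ 2) := by
      refine (mul_le_mul_of_nonneg_left hn (by positivity)).trans (le_of_eq ?_)
      field_simp
    have eA : 2 * (g κ + d2 κ / 2 * ((((2 * K + 1 : ℕ) : ℝ) + 1) / (2 * t) ^ 2)
        + d3 κ / 6 * (2 * (((2 * K + 1 : ℕ) : ℝ) + 1) / (2 * t) ^ 3))
        - (g κ + d2 κ / 2 * ((K + 1) / t ^ 2) + d3 κ / 6 * (2 * (K + 1) / t ^ 3)) - g κ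
        = - (d3 κ / 6 * ((K + 1) / t ^ 3)) := by
      push_cast; field_simp; ring
    rw [abs_le] at r1 r2 hc3 ⊢
    constructor <;> linarith
  rcases lt_or_ge K 3 with h | h
  · refine main (1 / 20) (1 / 30) (fun x hx => ?_) ?_
    · refine (hh0_le2 hκ hx).trans (le_of_eq ?_)
      field_simp
    · interval_cases K <;> norm_num
  · refine main 0 (1 / 12) (fun x hx => ?_) ?_
    · refine (hh0_le1 hκ hx).trans (le_of_eq ?_)
      field_simp
      ring
    · have h3' : (3:ℝ) ≤ K := by exact_mod_cast h
      have : 15 / 2 / ((K:ℝ) + 1) ≤ 15 / 2 / (3 + 1) := by gcongr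
      linarith

lemma interp_bound {g d1 d2 : ℝ → ℝ} {M2 : ℝ} (hc : ContinuousOn g (Set.Ici 0))
    (h1 : ∀ x, 0 < x → HasDerivAt g (d1 x) x) (h2 : ∀ x, 0 < x → HasDerivAt d1 (d2 x) x)
    (hM : ∀ x, 0 < x → |d2 x| ≤ M2) {x y : ℝ} (hx : 0 ≤ x) (hy : 0 ≤ y)
    {v w : ℝ} (hv : 0 ≤ v) (hw : 0 ≤ w) (hvw : v + w = 1) :
    |v * g x + w * g y - g (v * x + w * y)| ≤ M2 / 8 * (x - y) ^ 2 := by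
  have hM0 : 0 ≤ M2 := (abs_nonneg _).trans (hM 1 one_pos)
  have key : ∀ σ : ℝ, |σ| = 1 → ConvexOn ℝ (Set.Ici 0) (fun x => σ * g x + M2 / 2 * x ^ 2) := by
    intro σ hσ
    have D1 : ∀ z, 0 < z → HasDerivAt (fun x => σ * g x + M2 / 2 * x ^ 2) (σ * d1 z + M2 * z) z := by
      intro z hz
      refine (((h1 z hz).const_mul σ).add (((hasDerivAt_id z).pow 2).const_mul (M2 / 2))).congr_deriv ?_
      simp; ring
    have D2 : ∀ z, 0 < z → HasDerivAt (deriv (fun x => σ * g x + M2 / 2 * x ^ 2)) (σ * d2 z + M2) z := by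
      intro z hz
      have : HasDerivAt (fun z => σ * d1 z + M2 * z) (σ * d2 z + M2) z :=
        (((h2 z hz).const_mul σ).add ((hasDerivAt_id z).const_mul M2)).congr_deriv (by simp)
      refine this.congr_of_eventuallyEq ?_
      filter_upwards [lt_mem_nhds hz] with y hy
      exact (D1 y hy).deriv
    apply convexOn_of_deriv2_nonneg (convex_Ici 0)
    · fun_prop
    · rw [interior_Ici]; exact fun z hz => (D1 z hz).differentiableAt.differentiableWithinAt
    · rw [interior_Ici]; exact fun z hz => (D2 z hz).differentiableAt.differentiableWithinAt
    · rw [interior_Ici]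
      intro z hz
      simp only [Function.iterate_succ, Function.iterate_zero, Function.comp, id]
      rw [(D2 z hz).deriv]
      have : |σ * d2 z| ≤ M2 := by rw [abs_mul, hσ, one_mul]; exact hM z hz
      linarith [(abs_le.1 this).1]
  have a := (key 1 (by simp)).2 hx hy hv hw hvw
  have b := (key (-1) (by simp)).2 hx hy hv hw hvw
  simp only [smul_eq_mul] at a b
  have hw' : w = 1 - v := by linarith
  have e : M2 / 2 * (v * x ^ 2 + w * y ^ 2 - (v * x + w * y) ^ 2) ≤ M2 / 8 * (x - y) ^ 2 := by
    have : M2 / 8 * (x - y) ^ 2 - M2 / 2 * (v * x ^ 2 + w * y ^ 2 - (v * x + w * y) ^ 2)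
      = M2 / 8 * ((x - y) ^ 2 * (2 * v - 1) ^ 2) := by rw [hw']; ring
    have : 0 ≤ M2 / 8 * ((x - y) ^ 2 * (2 * v - 1) ^ 2) := by positivity
    linarith
  rw [abs_le]
  constructor <;> nlinarith

theorem Mt2_bound {g d1 d2 d3 d4 : ℝ → ℝ} {M2 M3 M4 t : ℝ} (ht : 0 < t)
    (hc : ContinuousOn g (Set.Ici 0))
    (h1 : ∀ x, 0 < x → HasDerivAt g (d1 x) x) (h2 : ∀ x, 0 < x → HasDerivAt d1 (d2 x) x)
    (h3 : ∀ x, 0 < x → HasDerivAt d2 (d3 x) x) (h4 : ∀ x, 0 < x → HasDerivAt d3 (d4 x) x)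
    (hM2 : ∀ x, 0 < x → |d2 x| ≤ M2) (hM3 : ∀ x, 0 < x → |x * d3 x| ≤ M3)
    (hM : ∀ x, 0 < x → |x ^ 2 * d4 x| ≤ M4) (u : ℝ) (hu : 0 ≤ u) :
    |Mt2 t g u - g u| ≤ M2 / (8 * t ^ 2) + M3 / (6 * t ^ 2) + 9 * M4 / (16 * t ^ 2) := by
  have ht' := ht.ne'
  have htu : 0 ≤ t * u := by positivity
  unfold Mt2
  set k := ⌊t * u⌋₊
  have hk1 : (k : ℝ) ≤ t * u := Nat.floor_le htu
  have hk2 : t * u < k + 1 := Nat.lt_floor_add_one _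
  have g1 := grid_bound ht h1 h2 h3 h4 hM3 hM (k + 1)
  have g0 := grid_bound ht h1 h2 h3 h4 hM3 hM k
  have r := interp_bound hc h1 h2 hM2 (x := ((k + 1 : ℕ) : ℝ) / t) (y := (k : ℝ) / t)
    (by positivity) (by positivity) (v := t * u - k) (w := k + 1 - t * u) (by linarith)
    (by linarith) (by ring)
  rw [show (t * u - k) * (((k + 1 : ℕ) : ℝ) / t) + (k + 1 - t * u) * ((k : ℝ) / t) = u by
    push_cast; field_simp; ring] at r
  rw [show M2 / 8 * (((k + 1 : ℕ) : ℝ) / t - (k : ℝ) / t) ^ 2 = M2 / (8 * t ^ 2) by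
    push_cast; field_simp; ring] at r
  set E := M3 / (6 * t ^ 2) + 9 * M4 / (16 * t ^ 2) with hE
  have e : (t * u - k) * Mgrid t g (k + 1) + (k + 1 - t * u) * Mgrid t g k - g u
    = (t * u - k) * (Mgrid t g (k + 1) - g (((k + 1 : ℕ) : ℝ) / t))
      + (k + 1 - t * u) * (Mgrid t g k - g (k / t))
      + ((t * u - k) * g (((k + 1 : ℕ) : ℝ) / t) + (k + 1 - t * u) * g (k / t) - g u) := by ring
  rw [e]
  refine (abs_add_three _ _ _).trans ?_
  rw [abs_mul, abs_mul, abs_of_nonneg (by linarith : 0 ≤ t * u - k),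
    abs_of_nonneg (by linarith : 0 ≤ k + 1 - t * u)]
  have q1 := mul_le_mul_of_nonneg_left g1 (by linarith : 0 ≤ t * u - k)
  have q0 := mul_le_mul_of_nonneg_left g0 (by linarith : 0 ≤ k + 1 - t * u)
  have : (t * u - k) * E + (k + 1 - t * u) * E = E := by ring
  linarith

/-! ### Part B: a class of exponentially decaying functions stable under convolution -/

def DecF (g : ℝ → ℝ) : Prop :=
  ContinuousOn g (Set.Ioi 0) ∧ ∃ C ε : ℝ, 0 ≤ C ∧ 0 < ε ∧ ∀ u, 0 < u → |g u| ≤ C * Real.exp (-ε * u)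

def EC : ℕ → (ℝ → ℝ) → Prop
  | 0, g => DecF g
  | n + 1, g => DecF g ∧ ∃ h, EC n h ∧ ∀ u, 0 < u → HasDerivAt g (h u / u) u

lemma EC.dec {n : ℕ} {g : ℝ → ℝ} (h : EC n g) : DecF g := by
  cases n with
  | zero => exact h
  | succ n => exact h.1

lemma EC.lower {n : ℕ} : ∀ {g : ℝ → ℝ}, EC (n + 1) g → EC n g := by
  induction n with
  | zero => intro g h; exact h.1
  | succ n ih =>
    intro g h
    obtain ⟨h0, k, hk, hd⟩ := h
    exact ⟨h0, k, ih hk, hd⟩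

lemma DecF.congr {g f : ℝ → ℝ} (h : DecF g) (e : ∀ u, 0 < u → f u = g u) : DecF f := by
  obtain ⟨hc, C, ε, hC, hε, hb⟩ := h
  exact ⟨hc.congr (fun u hu => e u hu), C, ε, hC, hε, fun u hu => by rw [e u hu]; exact hb u hu⟩

lemma EC.congr {n : ℕ} {g f : ℝ → ℝ} (h : EC n g) (e : ∀ u, 0 < u → f u = g u) : EC n f := by
  cases n with
  | zero => exact DecF.congr h e
  | succ n =>
    obtain ⟨h0, k, hk, hd⟩ := h
    refine ⟨h0.congr e, k, hk, fun u hu => (hd u hu).congr_of_eventuallyEq ?_⟩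
    filter_upwards [lt_mem_nhds hu] with y hy
    exact e y hy

lemma DecF.add {g f : ℝ → ℝ} (h : DecF g) (h' : DecF f) : DecF (fun u => g u + f u) := by
  obtain ⟨hc, C, ε, hC, hε, hb⟩ := h
  obtain ⟨hc', C', ε', hC', hε', hb'⟩ := h'
  refine ⟨hc.add hc', C + C', min ε ε', by positivity, lt_min hε hε', fun u hu => ?_⟩
  have e1 : Real.exp (-ε * u) ≤ Real.exp (-(min ε ε') * u) := by
    apply Real.exp_le_exp.2; nlinarith [min_le_left ε ε']
  have e2 : Real.exp (-ε' * u) ≤ Real.exp (-(min ε ε') * u) := by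
    apply Real.exp_le_exp.2; nlinarith [min_le_right ε ε']
  calc |g u + f u| ≤ |g u| + |f u| := abs_add_le _ _
    _ ≤ C * Real.exp (-ε * u) + C' * Real.exp (-ε' * u) := add_le_add (hb u hu) (hb' u hu)
    _ ≤ C * Real.exp (-(min ε ε') * u) + C' * Real.exp (-(min ε ε') * u) := by gcongr
    _ = _ := by ring

lemma DecF.smul {g : ℝ → ℝ} (c : ℝ) (h : DecF g) : DecF (fun u => c * g u) := by
  obtain ⟨hc, C, ε, hC, hε, hb⟩ := h
  refine ⟨hc.const_smul c, |c| * C, ε, by positivity, hε, fun u hu => ?_⟩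
  rw [abs_mul, mul_assoc]
  exact mul_le_mul_of_nonneg_left (hb u hu) (abs_nonneg c)

lemma u_exp {ε u : ℝ} (hε : 0 < ε) : u * Real.exp (-ε * u) ≤ 2 / ε * Real.exp (-(ε / 2) * u) := by
  have h := Real.add_one_le_exp (ε / 2 * u)
  have e : Real.exp (-ε * u) = Real.exp (-(ε / 2) * u) * Real.exp (-(ε / 2) * u) := by
    rw [← Real.exp_add]; congr 1; ring
  have e2 : Real.exp (ε / 2 * u) * Real.exp (-(ε / 2) * u) = 1 := by
    rw [← Real.exp_add]; simp
  have hp := Real.exp_pos (-(ε / 2) * u)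
  have h1 : u ≤ 2 / ε * Real.exp (ε / 2 * u) := by
    rw [div_mul_eq_mul_div, le_div_iff₀ hε]; linarith
  calc u * Real.exp (-ε * u) = (u * Real.exp (-(ε / 2) * u)) * Real.exp (-(ε / 2) * u) := by
        rw [e]; ring
    _ ≤ (2 / ε * Real.exp (ε / 2 * u) * Real.exp (-(ε / 2) * u)) * Real.exp (-(ε / 2) * u) := by
        gcongr
    _ = _ := by rw [mul_assoc (2 / ε), e2, mul_one]

lemma DecF.idmul {g : ℝ → ℝ} (h : DecF g) : DecF (fun u => u * g u) := by
  obtain ⟨hc, C, ε, hC, hε, hb⟩ := h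
  refine ⟨continuousOn_id.mul hc, C * (2 / ε), ε / 2, by positivity, by positivity, fun u hu => ?_⟩
  rw [abs_mul, abs_of_pos hu]
  calc u * |g u| ≤ u * (C * Real.exp (-ε * u)) := by gcongr; exact hb u hu
    _ = C * (u * Real.exp (-ε * u)) := by ring
    _ ≤ C * (2 / ε * Real.exp (-(ε / 2) * u)) := mul_le_mul_of_nonneg_left (u_exp hε) hC
    _ = _ := by ring

lemma EC.add {n : ℕ} : ∀ {g f : ℝ → ℝ}, EC n g → EC n f → EC n (fun u => g u + f u) := by
  induction n with
  | zero => intro g f h h'; exact DecF.add h h'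
  | succ n ih =>
    intro g f h h'
    obtain ⟨h0, k, hk, hd⟩ := h
    obtain ⟨h0', k', hk', hd'⟩ := h'
    refine ⟨h0.add h0', _, ih hk hk', fun u hu => ?_⟩
    exact ((hd u hu).add (hd' u hu)).congr_deriv (by ring)

lemma EC.smul {n : ℕ} (c : ℝ) : ∀ {g : ℝ → ℝ}, EC n g → EC n (fun u => c * g u) := by
  induction n with
  | zero => intro g h; exact DecF.smul c h
  | succ n ih =>
    intro g h
    obtain ⟨h0, k, hk, hd⟩ := h
    refine ⟨h0.smul c, _, ih hk, fun u hu => ?_⟩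
    exact ((hd u hu).const_mul c).congr_deriv (by ring)

lemma EC.idmul {n : ℕ} : ∀ {g : ℝ → ℝ}, EC n g → EC n (fun u => u * g u) := by
  induction n with
  | zero => intro g h; exact DecF.idmul h
  | succ n ih =>
    intro g h
    have hl := h.lower
    obtain ⟨h0, k, hk, hd⟩ := h
    refine ⟨h0.idmul, _, (ih hl).add (ih hk), fun u hu => ?_⟩
    exact ((hasDerivAt_id u).mul (hd u hu)).congr_deriv (by simp; field_simp)

lemma EC.sum {n : ℕ} {ι : Type} (s : Finset ι) {g : ι → ℝ → ℝ} (h : ∀ i ∈ s, EC n (g i))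
    (h0 : EC n (fun _ => (0:ℝ))) : EC n (fun u => ∑ i ∈ s, g i u) := by
  classical
  induction s using Finset.induction_on with
  | empty => simpa using h0
  | insert i s hi ih =>
    have := (h i (Finset.mem_insert_self _ _)).add
      (ih (fun j hj => h j (Finset.mem_insert_of_mem hj)))
    refine this.congr (fun u _ => ?_)
    rw [Finset.sum_insert hi]

lemma EC.zero (n : ℕ) : EC n (fun _ => (0:ℝ)) := by
  have d : DecF (fun _ => (0:ℝ)) :=
    ⟨continuousOn_const, 0, 1, le_refl _, one_pos, fun u _ => by simp⟩
  induction n with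
  | zero => exact d
  | succ n ih => exact ⟨d, _, ih, fun u _ => by simpa using hasDerivAt_const u (0:ℝ)⟩

noncomputable def cnv (g f : ℝ → ℝ) (u : ℝ) : ℝ := ∫ y in (0:ℝ)..u, g (u - y) * f y

noncomputable def cnI (g f : ℝ → ℝ) (u : ℝ) : ℝ :=
  ∫ s in Set.Ioo (0:ℝ) 1, g (u * (1 - s)) * f (u * s)

lemma cnv_eq (g f : ℝ → ℝ) (u : ℝ) : cnv g f u = u * cnI g f u := by
  unfold cnv cnI
  rw [← integral_Ioc_eq_integral_Ioo, ← intervalIntegral.integral_of_le zero_le_one]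
  have := intervalIntegral.mul_integral_comp_mul_left (a := 0) (b := 1)
    (f := fun y => g (u - y) * f y) u
  simp only [mul_zero, mul_one] at this
  rw [← this]
  congr 2
  funext s
  ring_nf

lemma cnv_comm (g f : ℝ → ℝ) (u : ℝ) : cnv g f u = cnv f g u := by
  unfold cnv
  have := intervalIntegral.integral_comp_sub_left (a := 0) (b := u)
    (f := fun y => f (u - y) * g y) u
  simp only [sub_self, sub_zero] at this
  rw [← this]
  congr 1
  funext s
  rw [mul_comm]
  congr 2
  ring

lemma DecF.bdd {g : ℝ → ℝ} (h : DecF g) : ∃ C, 0 ≤ C ∧ ∀ u, 0 < u → |g u| ≤ C := by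
  obtain ⟨hc, C, ε, hC, hε, hb⟩ := h
  refine ⟨C, hC, fun u hu => (hb u hu).trans ?_⟩
  apply mul_le_of_le_one_right hC
  apply Real.exp_le_one_iff.2
  nlinarith

lemma scale_cont {g f : ℝ → ℝ} (hg : ContinuousOn g (Set.Ioi 0)) (hf : ContinuousOn f (Set.Ioi 0))
    {u : ℝ} (hu : 0 < u) :
    ContinuousOn (fun s => g (u * (1 - s)) * f (u * s)) (Set.Ioo 0 1) := by
  refine ContinuousOn.mul ?_ ?_
  · exact hg.comp (by fun_prop) (fun s hs => by
      have := hs.2; exact mul_pos hu (by linarith))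
  · exact hf.comp (by fun_prop) (fun s hs => mul_pos hu hs.1)

lemma cnI_int {g f : ℝ → ℝ} (hg : DecF g) (hf : DecF f) {u : ℝ} (hu : 0 < u) :
    IntegrableOn (fun s => g (u * (1 - s)) * f (u * s)) (Set.Ioo 0 1) := by
  obtain ⟨C, hC, hb⟩ := hg.bdd
  obtain ⟨C', hC', hb'⟩ := hf.bdd
  refine Integrable.mono' (g := fun _ => C * C') ?_ ?_ ?_
  · exact integrable_const _
  · exact (scale_cont hg.1 hf.1 hu).aestronglyMeasurable measurableSet_Ioo
  · refine (ae_restrict_mem measurableSet_Ioo).mono (fun s hs => ?_)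
    rw [Real.norm_eq_abs, abs_mul]
    have h1 := hb (u * (1 - s)) (mul_pos hu (by linarith [hs.2]))
    have h2 := hb' (u * s) (mul_pos hu hs.1)
    gcongr

lemma cnI_contAt {g f : ℝ → ℝ} (hg : DecF g) (hf : DecF f) {u : ℝ} (hu : 0 < u) :
    ContinuousAt (cnI g f) u := by
  obtain ⟨C, hC, hb⟩ := hg.bdd
  obtain ⟨C', hC', hb'⟩ := hf.bdd
  refine continuousAt_of_dominated (bound := fun _ => C * C') ?_ ?_ (integrable_const _) ?_
  · filter_upwards [lt_mem_nhds hu] with v hv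
    exact (scale_cont hg.1 hf.1 hv).aestronglyMeasurable measurableSet_Ioo
  · filter_upwards [lt_mem_nhds hu] with v hv
    refine (ae_restrict_mem measurableSet_Ioo).mono (fun s hs => ?_)
    rw [Real.norm_eq_abs, abs_mul]
    have h1 := hb (v * (1 - s)) (mul_pos hv (by linarith [hs.2]))
    have h2 := hb' (v * s) (mul_pos hv hs.1)
    gcongr
  · refine (ae_restrict_mem measurableSet_Ioo).mono (fun s hs => ?_)
    have p1 : 0 < u * (1 - s) := mul_pos hu (by linarith [hs.2])
    have p2 : 0 < u * s := mul_pos hu hs.1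
    have c1 : ContinuousAt g (u * (1 - s)) := hg.1.continuousAt (Ioi_mem_nhds p1)
    have c2 : ContinuousAt f (u * s) := hf.1.continuousAt (Ioi_mem_nhds p2)
    exact (ContinuousAt.comp (f := fun v => v * (1 - s)) c1 (by fun_prop)).mul
      (ContinuousAt.comp (f := fun v => v * s) c2 (by fun_prop))

lemma DecF.cnv {g f : ℝ → ℝ} (hg : DecF g) (hf : DecF f) : DecF (cnv g f) := by
  have hcont : ContinuousOn (_root_.cnv g f) (Set.Ioi 0) := by
    have e : _root_.cnv g f = fun u => u * cnI g f u := funext (cnv_eq g f)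
    rw [e]
    exact continuousOn_id.mul (fun u hu => (cnI_contAt hg hf hu).continuousWithinAt)
  have hgi := hg; have hfi := hf
  obtain ⟨-, C, ε, hC, hε, hb⟩ := hg
  obtain ⟨-, C', ε', hC', hε', hb'⟩ := hf
  have key : DecF (fun u => u * (C * C' * Real.exp (-(min ε ε') * u))) := by
    apply DecF.idmul
    refine ⟨by fun_prop, C * C', min ε ε', by positivity, lt_min hε hε', fun u hu => ?_⟩
    rw [abs_of_nonneg (by positivity)]
  obtain ⟨-, D, δ, hD, hδ, hk⟩ := key
  refine ⟨hcont, D, δ, hD, hδ, fun u hu => le_trans ?_ (hk u hu)⟩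
  rw [cnv_eq, abs_mul, abs_mul, abs_of_pos hu]
  refine mul_le_mul_of_nonneg_left ?_ hu.le
  rw [abs_of_nonneg (by positivity : 0 ≤ C * C' * _)]
  unfold cnI
  rw [← Real.norm_eq_abs]
  have := norm_setIntegral_le_of_norm_le_const (μ := volume) (s := Set.Ioo (0:ℝ) 1)
    (f := fun s => g (u * (1 - s)) * f (u * s))
    (C := C * C' * Real.exp (-(min ε ε') * u)) (by simp) (fun s hs => ?_)
  · simpa using this
  · have p1 : 0 < u * (1 - s) := mul_pos hu (by linarith [hs.2])
    have p2 : 0 < u * s := mul_pos hu hs.1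
    rw [Real.norm_eq_abs, abs_mul]
    have e1 : Real.exp (-ε * (u * (1 - s))) ≤ Real.exp (-(min ε ε') * (u * (1 - s))) := by
      apply Real.exp_le_exp.2; nlinarith [min_le_left ε ε']
    have e2 : Real.exp (-ε' * (u * s)) ≤ Real.exp (-(min ε ε') * (u * s)) := by
      apply Real.exp_le_exp.2; nlinarith [min_le_right ε ε']
    calc |g (u * (1 - s))| * |f (u * s)|
        ≤ (C * Real.exp (-ε * (u * (1 - s)))) * (C' * Real.exp (-ε' * (u * s))) :=
          mul_le_mul (hb _ p1) (hb' _ p2) (abs_nonneg _) (by positivity)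
      _ ≤ (C * Real.exp (-(min ε ε') * (u * (1 - s)))) * (C' * Real.exp (-(min ε ε') * (u * s))) := by
          gcongr
      _ = C * C' * (Real.exp (-(min ε ε') * (u * (1 - s))) * Real.exp (-(min ε ε') * (u * s))) := by
          ring
      _ = _ := by rw [← Real.exp_add]; congr 2; ring

lemma cnv_deriv {g f h k : ℝ → ℝ} (hg : DecF g) (hf : DecF f) (hh : DecF h) (hk : DecF k)
    (dg : ∀ u, 0 < u → HasDerivAt g (h u / u) u) (df : ∀ u, 0 < u → HasDerivAt f (k u / u) u)
    {u : ℝ} (hu : 0 < u) :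
    HasDerivAt (cnv g f) ((cnv g f u + cnv h f u + cnv g k u) / u) u := by
  obtain ⟨C, hC, hb⟩ := hg.bdd
  obtain ⟨C', hC', hb'⟩ := hf.bdd
  obtain ⟨D, hD, hd⟩ := hh.bdd
  obtain ⟨D', hD', hd'⟩ := hk.bdd
  have hder : HasDerivAt (cnI g f) (∫ s in Set.Ioo (0:ℝ) 1,
      (h (u * (1 - s)) * f (u * s) + g (u * (1 - s)) * k (u * s)) / u) u := by
    refine (hasDerivAt_integral_of_dominated_loc_of_deriv_le (μ := volume.restrict (Set.Ioo (0:ℝ) 1))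
      (F := fun u s => g (u * (1 - s)) * f (u * s))
      (F' := fun u s => (h (u * (1 - s)) * f (u * s) + g (u * (1 - s)) * k (u * s)) / u)
      (bound := fun _ => (D * C' + C * D') / (u / 2)) (s := Set.Ioi (u / 2))
      (Ioi_mem_nhds (by linarith)) ?_ (cnI_int hg hf hu) ?_ ?_ (integrable_const _) ?_).2
    · filter_upwards [lt_mem_nhds hu] with v hv
      exact (scale_cont hg.1 hf.1 hv).aestronglyMeasurable measurableSet_Ioo
    · exact (((scale_cont hh.1 hf.1 hu).add (scale_cont hg.1 hk.1 hu)).div_const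
        u).aestronglyMeasurable measurableSet_Ioo
    · refine (ae_restrict_mem measurableSet_Ioo).mono (fun s hs v hv => ?_)
      have hv' : u / 2 < v := hv
      have hv0 : 0 < v := by linarith
      have p1 : 0 < v * (1 - s) := mul_pos hv0 (by linarith [hs.2])
      have p2 : 0 < v * s := mul_pos hv0 hs.1
      rw [Real.norm_eq_abs, abs_div, abs_of_pos hv0]
      have h1 := hb _ p1
      have h2 := hb' _ p2
      have h3 := hd _ p1
      have h4 := hd' _ p2
      have : |h (v * (1 - s)) * f (v * s) + g (v * (1 - s)) * k (v * s)| ≤ D * C' + C * D' := by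
        refine (abs_add_le _ _).trans ?_
        rw [abs_mul, abs_mul]
        gcongr
      gcongr
    · refine (ae_restrict_mem measurableSet_Ioo).mono (fun s hs v hv => ?_)
      have hv' : u / 2 < v := hv
      have hv0 : 0 < v := by linarith
      have hs1 : 0 < 1 - s := by linarith [hs.2]
      have hs0 := hs.1
      have p1 : 0 < v * (1 - s) := mul_pos hv0 hs1
      have p2 : 0 < v * s := mul_pos hv0 hs.1
      have q1 := HasDerivAt.comp v (h := fun v => v * (1 - s)) (dg _ p1)
        ((hasDerivAt_id v).mul_const (1 - s))
      have q2 := HasDerivAt.comp v (h := fun v => v * s) (df _ p2) ((hasDerivAt_id v).mul_const s)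
      refine (q1.mul q2).congr_deriv ?_
      simp only [Function.comp]
      field_simp
  have e : cnv g f = fun u => u * cnI g f u := funext (cnv_eq g f)
  have := (hasDerivAt_id u).mul hder
  rw [integral_div, integral_add (cnI_int hh hf hu) (cnI_int hg hk hu)] at this
  rw [cnv_eq g f u, cnv_eq h, cnv_eq g k, e]
  refine this.congr_deriv ?_
  simp only [cnI, id]
  field_simp
  ring

lemma EC.cnv {n : ℕ} : ∀ {g f : ℝ → ℝ}, EC n g → EC n f → EC n (cnv g f) := by
  induction n with
  | zero => intro g f h h'; exact DecF.cnv h h'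
  | succ n ih =>
    intro g f h h'
    have hl := h.lower
    have hl' := h'.lower
    obtain ⟨h0, k, hk, hd⟩ := h
    obtain ⟨h0', k', hk', hd'⟩ := h'
    exact ⟨h0.cnv h0', _, ((ih hl hl').add (ih hk hl')).add (ih hl hk'), fun u hu =>
      cnv_deriv h0 h0' hk.dec hk'.dec hd hd' hu⟩

/-! ### Part C: Leibniz rule for convolutions -/

noncomputable def ext0 (g : ℝ → ℝ) (x : ℝ) : ℝ := g (max x 0)

lemma ext0_cont {g : ℝ → ℝ} (hg : ContinuousOn g (Set.Ici 0)) : Continuous (ext0 g) :=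
  hg.comp_continuous (by fun_prop) (fun x => le_max_right x 0)

lemma lip_aux {g g' : ℝ → ℝ} {K : ℝ} (hg : ContinuousOn g (Set.Ici 0))
    (hd : ∀ x, 0 < x → HasDerivAt g (g' x) x) (hK : ∀ x, 0 < x → |g' x| ≤ K) {x y : ℝ}
    (hx : 0 ≤ x) (hxy : x ≤ y) : |g y - g x| ≤ K * (y - x) := by
  rcases hxy.eq_or_lt with h | h
  · simp [h]
  · obtain ⟨c, hc, e⟩ := exists_hasDerivAt_eq_slope g g' h
      (hg.mono (fun z hz => hx.trans hz.1)) (fun z hz => hd z (hx.trans_lt hz.1))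
    have h0 : 0 < y - x := by linarith
    rw [eq_div_iff h0.ne'] at e
    rw [← e, abs_mul, abs_of_pos h0]
    have := hK c (hx.trans_lt hc.1)
    gcongr

lemma ext0_lip {g g' : ℝ → ℝ} {K : ℝ} (hg : ContinuousOn g (Set.Ici 0))
    (hd : ∀ x, 0 < x → HasDerivAt g (g' x) x) (hK : ∀ x, 0 < x → |g' x| ≤ K) (x y : ℝ) :
    |ext0 g x - ext0 g y| ≤ K * |x - y| := by
  have hK0 : 0 ≤ K := (abs_nonneg _).trans (hK 1 one_pos)
  wlog h : y ≤ x generalizing x y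
  · rw [abs_sub_comm, abs_sub_comm x y]
    exact this y x (by linarith)
  refine (lip_aux hg hd hK (le_max_right y 0) (max_le_max_right 0 h)).trans ?_
  rw [abs_of_nonneg (by linarith : 0 ≤ x - y)]
  refine mul_le_mul_of_nonneg_left ?_ hK0
  rw [max_def, max_def]
  split_ifs <;> linarith

lemma ext0_deriv {g g' : ℝ → ℝ} (hd : ∀ x, 0 < x → HasDerivAt g (g' x) x) {x : ℝ} (hx : x ≠ 0) :
    HasDerivAt (ext0 g) ((Set.Ioi 0).indicator g' x) x := by
  rcases hx.lt_or_gt with h | h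
  · rw [Set.indicator_of_notMem (by simpa using h.le)]
    refine (hasDerivAt_const x (g 0)).congr_of_eventuallyEq ?_
    filter_upwards [gt_mem_nhds h] with y hy
    simp [ext0, max_eq_right hy.le]
  · rw [Set.indicator_of_mem (by simpa using h)]
    refine (hd x h).congr_of_eventuallyEq ?_
    filter_upwards [lt_mem_nhds h] with y hy
    simp [ext0, max_eq_left hy.le]

lemma bdd_meas_int {f : ℝ → ℝ} {M x y : ℝ} (hx : 0 ≤ x) (hxy : x ≤ y)
    (hfm : AEStronglyMeasurable f (volume.restrict (Set.Ioc 0 y)))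
    (hfb : ∀ z, 0 < z → z ≤ y → |f z| ≤ M) : IntervalIntegrable f volume x y := by
  rw [intervalIntegrable_iff_integrableOn_Ioc_of_le hxy]
  refine Integrable.mono' (g := fun _ => M) (integrable_const _) ?_ ?_
  · exact hfm.mono_measure (Measure.restrict_mono (Set.Ioc_subset_Ioc_left hx) le_rfl)
  · refine (ae_restrict_mem measurableSet_Ioc).mono (fun s hs => ?_)
    exact hfb s (hx.trans_lt hs.1) hs.2

lemma leib_main {g g' f : ℝ → ℝ} {K M R : ℝ} (hg : ContinuousOn g (Set.Ici 0))
    (hd : ∀ x, 0 < x → HasDerivAt g (g' x) x) (hg' : ContinuousOn g' (Set.Ioi 0))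
    (hK : ∀ x, 0 < x → |g' x| ≤ K) (hR : 0 ≤ R)
    (hfm : AEStronglyMeasurable f (volume.restrict (Set.Ioc 0 R)))
    (hfb : ∀ z, 0 < z → z ≤ R → |f z| ≤ M) (u : ℝ) :
    HasDerivAt (fun v => ∫ y in (0:ℝ)..R, ext0 g (v - y) * f y)
      (∫ y in (0:ℝ)..R, (Set.Ioi 0).indicator g' (u - y) * f y) u := by
  have hK0 : 0 ≤ K := (abs_nonneg _).trans (hK 1 one_pos)
  have hec := ext0_cont hg
  have hfint : IntervalIntegrable f volume 0 R := bdd_meas_int le_rfl hR hfm hfb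
  have hmeas : Measurable ((Set.Ioi (0:ℝ)).indicator g') := by
    classical
    rw [← Set.piecewise_eq_indicator]
    exact hg'.measurable_piecewise continuousOn_const measurableSet_Ioi
  refine (intervalIntegral.hasDerivAt_integral_of_dominated_loc_of_lip
    (bound := fun _ => K * M) (s := Set.univ) Filter.univ_mem ?_ ?_ ?_ ?_ ?_ ?_).2
  · refine Eventually.of_forall (fun v => ?_)
    rw [Set.uIoc_of_le hR]
    exact (hec.comp (by fun_prop : Continuous fun y => v - y)).aestronglyMeasurable.mul hfm
  · exact hfint.continuousOn_mul (hec.comp (by fun_prop : Continuous fun y => u - y)).continuousOn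
  · rw [Set.uIoc_of_le hR]
    exact (hmeas.comp (by fun_prop : Measurable fun y => u - y)).aestronglyMeasurable.mul hfm
  · refine Eventually.of_forall (fun y hy => ?_)
    rw [Set.uIoc_of_le hR] at hy
    refine LipschitzOnWith.of_dist_le_mul (fun a _ b _ => ?_)
    rw [Real.dist_eq, Real.dist_eq, ← sub_mul, abs_mul]
    have h1 := ext0_lip hg hd hK (a - y) (b - y)
    have h2 := hfb y hy.1 hy.2
    rw [sub_sub_sub_cancel_right] at h1
    have hM : 0 ≤ M := (abs_nonneg _).trans h2
    have : ((Real.nnabs (K * M) : NNReal) : ℝ) = K * M := by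
      rw [Real.coe_nnabs, abs_of_nonneg (by positivity)]
    rw [this]
    calc |ext0 g (a - y) - ext0 g (b - y)| * |f y| ≤ (K * |a - b|) * M := by gcongr
      _ = _ := by ring
  · exact intervalIntegrable_const
  · have : ∀ᵐ y : ℝ, y ≠ u := by
      rw [ae_iff]; simp
    refine this.mono (fun y hy _ => ?_)
    have h := ext0_deriv hd (x := u - y) (sub_ne_zero.2 hy.symm)
    exact (h.comp_sub_const u y).mul_const (f y)

lemma cnv_split {g f : ℝ → ℝ} {M R v : ℝ} (hg : ContinuousOn g (Set.Ici 0)) (hv : 0 ≤ v)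
    (hvR : v ≤ R) (hfm : AEStronglyMeasurable f (volume.restrict (Set.Ioc 0 R)))
    (hfb : ∀ z, 0 < z → z ≤ R → |f z| ≤ M) :
    cnv g f v = (∫ y in (0:ℝ)..R, ext0 g (v - y) * f y) - g 0 * ∫ y in v..R, f y := by
  have hec : Continuous (fun y => ext0 g (v - y)) :=
    (ext0_cont hg).comp (by fun_prop : Continuous fun y => v - y)
  have hR := hv.trans hvR
  have hfint : IntervalIntegrable f volume 0 R := bdd_meas_int le_rfl hR hfm hfb
  have i1 : IntervalIntegrable f volume 0 v := hfint.mono_set (by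
    rw [Set.uIcc_of_le hv, Set.uIcc_of_le hR]; exact Set.Icc_subset_Icc_right hvR)
  have i2 : IntervalIntegrable f volume v R := bdd_meas_int hv hvR hfm hfb
  rw [← intervalIntegral.integral_add_adjacent_intervals (b := v)
    (i1.continuousOn_mul hec.continuousOn) (i2.continuousOn_mul hec.continuousOn)]
  have e1 : ∫ y in (0:ℝ)..v, ext0 g (v - y) * f y = cnv g f v := by
    unfold cnv
    refine intervalIntegral.integral_congr (fun y hy => ?_)
    rw [Set.uIcc_of_le hv] at hy
    simp only [ext0]
    rw [max_eq_left (by linarith [hy.2])]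
  have e2 : ∫ y in v..R, ext0 g (v - y) * f y = g 0 * ∫ y in v..R, f y := by
    rw [← intervalIntegral.integral_const_mul]
    refine intervalIntegral.integral_congr (fun y hy => ?_)
    rw [Set.uIcc_of_le hvR] at hy
    simp only [ext0]
    rw [max_eq_right (by linarith [hy.1])]
  rw [e1, e2]; ring

lemma cnv_leib {g g' f : ℝ → ℝ} {K M u : ℝ} (hg : ContinuousOn g (Set.Ici 0))
    (hd : ∀ x, 0 < x → HasDerivAt g (g' x) x) (hg' : ContinuousOn g' (Set.Ioi 0))
    (hK : ∀ x, 0 < x → |g' x| ≤ K)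
    (hfc : ContinuousOn f (Set.Ioi 0))
    (hfb : ∀ z, 0 < z → |f z| ≤ M) (hu : 0 < u) :
    HasDerivAt (cnv g f) (g 0 * f u + cnv g' f u) u := by
  set R := u + 1
  have hR : 0 ≤ R := by simp only [R]; linarith
  have huR : u ≤ R := by simp only [R]; linarith
  have hfm : AEStronglyMeasurable f (volume.restrict (Set.Ioc 0 R)) :=
    (hfc.mono (fun z hz => hz.1)).aestronglyMeasurable measurableSet_Ioc
  have hfb' : ∀ z, 0 < z → z ≤ R → |f z| ≤ M := fun z hz _ => hfb z hz
  have D1 := leib_main hg hd hg' hK hR hfm hfb' u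
  have i2 : IntervalIntegrable f volume u R := bdd_meas_int hu.le huR hfm hfb'
  have D2 : HasDerivAt (fun v => ∫ y in v..R, f y) (- f u) u := by
    refine intervalIntegral.integral_hasDerivAt_left i2 ?_ (hfc.continuousAt (Ioi_mem_nhds hu))
    exact ⟨Set.Ioc 0 R, Ioc_mem_nhds hu (by simp only [R]; linarith), hfm⟩
  have D := D1.sub (D2.const_mul (g 0))
  have ev : cnv g f =ᶠ[𝓝 u] fun v => (∫ y in (0:ℝ)..R, ext0 g (v - y) * f y)
      - g 0 * ∫ y in v..R, f y := by
    filter_upwards [Ioo_mem_nhds hu (by simp only [R]; linarith : u < R)] with v hv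
    exact cnv_split hg hv.1.le hv.2.le hfm hfb'
  refine (D.congr_of_eventuallyEq ev).congr_deriv ?_
  have e : ∫ y in (0:ℝ)..R, (Set.Ioi 0).indicator g' (u - y) * f y = cnv g' f u := by
    unfold cnv
    rw [intervalIntegral.integral_of_le hR, intervalIntegral.integral_of_le hu.le,
      integral_Ioc_eq_integral_Ioo (y := u)]
    refine (setIntegral_eq_of_subset_of_forall_sdiff_eq_zero measurableSet_Ioc
      (s := Set.Ioo 0 u) (fun z hz => ⟨hz.1, hz.2.le.trans huR⟩) ?_).trans ?_
    rotate_left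
    · refine setIntegral_congr_fun measurableSet_Ioo (fun y hy => ?_)
      rw [Set.indicator_of_mem (by simpa using hy.2)]
    · intro y hy
      rw [Set.indicator_of_notMem, zero_mul]
      intro h
      exact hy.2 ⟨hy.1.1, by simpa using h⟩
  rw [e]; ring

lemma cnv_cont {g g' f : ℝ → ℝ} {K : ℝ} (hg : ContinuousOn g (Set.Ici 0))
    (hd : ∀ x, 0 < x → HasDerivAt g (g' x) x) (hg' : ContinuousOn g' (Set.Ioi 0))
    (hK : ∀ x, 0 < x → |g' x| ≤ K)
    (hfm : ∀ R, 0 < R → AEStronglyMeasurable f (volume.restrict (Set.Ioc 0 R)))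
    (hfb : ∀ R, 0 < R → ∃ M, ∀ z, 0 < z → z ≤ R → |f z| ≤ M) :
    ContinuousOn (cnv g f) (Set.Ici 0) := by
  intro u hu
  have hu' : 0 ≤ u := hu
  have hR : 0 < u + 1 := by linarith
  obtain ⟨M, hM⟩ := hfb (u + 1) hR
  have hfint : IntervalIntegrable f volume 0 (u + 1) := bdd_meas_int le_rfl hR.le (hfm _ hR) hM
  have c1 := (leib_main hg hd hg' hK hR.le (hfm _ hR) hM u).continuousAt.continuousWithinAt
    (s := Set.Icc 0 (u + 1))
  have c2 : ContinuousWithinAt (fun v => ∫ y in v..(u + 1), f y) (Set.Icc 0 (u + 1)) u := by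
    have := intervalIntegral.continuousOn_primitive_interval_left (μ := volume) (f := f) (a := 0)
      (b := u + 1) (by
        rw [Set.uIcc_of_le hR.le, integrableOn_Icc_iff_integrableOn_Ioc]
        exact (intervalIntegrable_iff_integrableOn_Ioc_of_le hR.le).1 hfint)
    rw [Set.uIcc_of_le hR.le] at this
    exact this u ⟨hu', by linarith⟩
  have c := c1.sub (c2.const_mul (g 0))
  have c' : ContinuousWithinAt (cnv g f) (Set.Icc 0 (u + 1)) u := by
    refine c.congr (fun v hv => cnv_split hg hv.1 hv.2 (hfm _ hR) hM)
      (cnv_split hg hu' (by linarith) (hfm _ hR) hM)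
  refine c'.mono_of_mem_nhdsWithin ?_
  rw [← Set.Ici_inter_Iic]
  exact inter_mem_nhdsWithin _ (Iic_mem_nhds (by linarith))

/-! ### Part D: the renewal equation -/

lemma DecF.intOn {w : ℝ → ℝ} (hw : DecF w) : IntegrableOn w (Set.Ioi 0) := by
  obtain ⟨hc, C, ε, hC, hε, hb⟩ := hw
  refine Integrable.mono' (g := fun u => C * Real.exp (-ε * u)) ?_
    (hc.aestronglyMeasurable measurableSet_Ioi) ?_
  · exact (integrableOn_exp_mul_Ioi (by linarith) 0).const_mul C
  · exact (ae_restrict_mem measurableSet_Ioi).mono (fun u hu => hb u hu)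

lemma DecF.tail {w : ℝ → ℝ} {C ε : ℝ} (hC : 0 ≤ C) (hε : 0 < ε)
    (hb : ∀ u, 0 < u → |w u| ≤ C * Real.exp (-ε * u)) {u : ℝ} (hu : 0 ≤ u) :
    |∫ y in Set.Ioi u, w y| ≤ C / ε * Real.exp (-ε * u) := by
  have h1 : ‖∫ y in Set.Ioi u, w y‖ ≤ ∫ y in Set.Ioi u, C * Real.exp (-ε * y) := by
    refine norm_integral_le_of_norm_le ?_ ?_
    · exact (integrableOn_exp_mul_Ioi (by linarith) u).const_mul C
    · exact (ae_restrict_mem measurableSet_Ioi).mono (fun y hy => hb y (hu.trans_lt hy))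
  rw [integral_const_mul, integral_exp_mul_Ioi (by linarith) u, Real.norm_eq_abs] at h1
  refine h1.trans (le_of_eq ?_)
  field_simp

lemma tail_eq {w : ℝ → ℝ} (hi : IntegrableOn w (Set.Ioi 0)) {u : ℝ} (hu : 0 ≤ u) :
    ∫ y in Set.Ioi u, w y = (∫ y in Set.Ioi 0, w y) - ∫ y in (0:ℝ)..u, w y := by
  rw [intervalIntegral.integral_of_le hu, ← Set.Ioc_union_Ioi_eq_Ioi hu,
    setIntegral_union (Set.Ioc_disjoint_Ioi le_rfl) measurableSet_Ioi
      (hi.mono_set Set.Ioc_subset_Ioi_self) (hi.mono_set (Set.Ioi_subset_Ioi hu))]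
  ring

lemma tail_deriv {w : ℝ → ℝ} (hi : IntegrableOn w (Set.Ioi 0)) (hc : ContinuousOn w (Set.Ioi 0))
    {u : ℝ} (hu : 0 < u) : HasDerivAt (fun u => ∫ y in Set.Ioi u, w y) (- w u) u := by
  have hI : IntervalIntegrable w volume 0 u :=
    (intervalIntegrable_iff_integrableOn_Ioc_of_le hu.le).2 (hi.mono_set Set.Ioc_subset_Ioi_self)
  have h := intervalIntegral.integral_hasDerivAt_right hI
    ⟨Set.Ioi 0, Ioi_mem_nhds hu, hi.aestronglyMeasurable⟩ (hc.continuousAt (Ioi_mem_nhds hu))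
  have h2 := h.const_sub (∫ y in Set.Ioi 0, w y)
  refine h2.congr_of_eventuallyEq ?_
  filter_upwards [lt_mem_nhds hu] with v hv
  exact tail_eq hi hv.le

lemma tail_cont {w : ℝ → ℝ} (hi : IntegrableOn w (Set.Ioi 0)) :
    ContinuousOn (fun u => ∫ y in Set.Ioi u, w y) (Set.Ici 0) := by
  have h : ContinuousOn (fun u => (∫ y in Set.Ioi 0, w y) - ∫ y in (0:ℝ)..u, w y) (Set.Ici 0) := by
    refine continuousOn_const.sub ?_
    intro u hu
    have hu' : 0 ≤ u := hu
    have := intervalIntegral.continuousOn_primitive_interval (μ := volume) (f := w) (a := 0)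
      (b := u + 1) (by
        rw [Set.uIcc_of_le (by linarith), integrableOn_Icc_iff_integrableOn_Ioc]
        exact hi.mono_set Set.Ioc_subset_Ioi_self)
    rw [Set.uIcc_of_le (by linarith)] at this
    refine (this u ⟨hu', by linarith⟩).mono_of_mem_nhdsWithin ?_
    rw [← Set.Ici_inter_Iic]
    exact inter_mem_nhdsWithin _ (Iic_mem_nhds (by linarith))
  exact h.congr (fun u hu => tail_eq hi hu)

lemma renewal_decay {w ψ : ℝ → ℝ} {φ : ℝ} (hφ0 : 0 < φ) (hφ1 : φ < 1) (hw : DecF w)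
    (hwpos : ∀ y, 0 < y → 0 < w y) (hw1 : ∀ u, 0 ≤ u → ∫ y in (0:ℝ)..u, w y ≤ 1)
    (hψ_loc : ∀ x : ℝ, 0 < x → ∃ M, ∀ u ∈ Set.Icc (0:ℝ) x, |ψ u| ≤ M)
    (hψ_eq : ∀ u : ℝ, 0 ≤ u →
      ψ u = φ * ((∫ y in (0:ℝ)..u, ψ (u - y) * w y) + ∫ y in Set.Ioi u, w y)) :
    ∃ C ε : ℝ, 0 ≤ C ∧ 0 < ε ∧ ∀ u, 0 ≤ u → |ψ u| ≤ C * Real.exp (-ε * u) := by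
  have hwi := hw.intOn
  obtain ⟨hwc, C, δ, hC, hδ, hb⟩ := hw
  set L := C / (δ / 2) with hL
  have hL0 : 0 ≤ L := by positivity
  set θ := (1 - φ) / (2 * (L + 1)) with hθ
  have hθ0 : 0 < θ := by apply div_pos <;> linarith
  have hθ1 : θ ≤ 1 := by
    rw [hθ, div_le_one (by linarith)]; linarith
  have hθL : θ * (L + 1) = (1 - φ) / 2 := by rw [hθ]; field_simp
  set ε := θ * (δ / 2) with hε
  have hε0 : 0 < ε := by positivity
  have hεδ : ε ≤ δ := by rw [hε]; nlinarith
  have hwI : ∀ u, 0 ≤ u → IntervalIntegrable w volume 0 u := fun u hu =>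
    (intervalIntegrable_iff_integrableOn_Ioc_of_le hu).2 (hwi.mono_set Set.Ioc_subset_Ioi_self)
  -- weighted mass
  have hmass : ∀ u, 0 ≤ u → ∫ y in (0:ℝ)..u, Real.exp (ε * y) * w y ≤ 1 + θ * L := by
    intro u hu
    have i2 : IntervalIntegrable (fun y => θ * C * Real.exp (-(δ / 2) * y)) volume 0 u :=
      Continuous.intervalIntegrable (by fun_prop) _ _
    have h1 : ∫ y in (0:ℝ)..u, Real.exp (ε * y) * w y
        ≤ ∫ y in (0:ℝ)..u, (w y + θ * C * Real.exp (-(δ / 2) * y)) := by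
      rw [intervalIntegral.integral_of_le hu, intervalIntegral.integral_of_le hu]
      refine setIntegral_mono_on ?_ ?_ measurableSet_Ioc ?_
      · exact (intervalIntegrable_iff_integrableOn_Ioc_of_le hu).1
          ((hwI u hu).continuousOn_mul (by fun_prop))
      · exact (intervalIntegrable_iff_integrableOn_Ioc_of_le hu).1 ((hwI u hu).add i2)
      · intro y hy
        have hconv := convexOn_exp.2 (Set.mem_univ (0:ℝ)) (Set.mem_univ (δ / 2 * y))
          (by linarith : 0 ≤ 1 - θ) hθ0.le (by ring)
        simp only [smul_eq_mul, mul_zero, zero_add, Real.exp_zero, mul_one] at hconv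
        have e1 : θ * (δ / 2 * y) = ε * y := by rw [hε]; ring
        rw [e1] at hconv
        have hwy := hwpos y hy.1
        have hb' := hb y hy.1
        rw [abs_of_pos hwy] at hb'
        have e2 : Real.exp (δ / 2 * y) * Real.exp (-δ * y) = Real.exp (-(δ / 2) * y) := by
          rw [← Real.exp_add]; congr 1; ring
        calc Real.exp (ε * y) * w y ≤ (1 + θ * Real.exp (δ / 2 * y)) * w y := by
              apply mul_le_mul_of_nonneg_right _ hwy.le
              linarith
          _ = w y + θ * Real.exp (δ / 2 * y) * w y := by ring
          _ ≤ w y + θ * Real.exp (δ / 2 * y) * (C * Real.exp (-δ * y)) := by gcongr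
          _ = w y + θ * C * (Real.exp (δ / 2 * y) * Real.exp (-δ * y)) := by ring
          _ = _ := by rw [e2]
    rw [intervalIntegral.integral_add (hwI u hu) i2] at h1
    have h2 : ∫ y in (0:ℝ)..u, θ * C * Real.exp (-(δ / 2) * y) ≤ θ * L := by
      rw [intervalIntegral.integral_of_le hu]
      have hfint := (integrableOn_exp_mul_Ioi (a := -(δ / 2)) (by linarith) 0).const_mul (θ * C)
      have : ∫ y in Set.Ioc 0 u, θ * C * Real.exp (-(δ / 2) * y)
          ≤ ∫ y in Set.Ioi 0, θ * C * Real.exp (-(δ / 2) * y) := by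
        refine setIntegral_mono_set hfint ?_ (Eventually.of_forall Set.Ioc_subset_Ioi_self)
        exact Eventually.of_forall (fun y => by simp only [Pi.zero_apply]; positivity)
      refine this.trans (le_of_eq ?_)
      rw [integral_const_mul, integral_exp_mul_Ioi (by linarith) 0, hL]
      simp
      field_simp
    linarith [hw1 u hu]
  -- contraction
  set D := C / δ
  have hD : 0 ≤ D := by positivity
  have hstep : ∀ x S : ℝ, 0 ≤ S → (∀ u ∈ Set.Icc (0:ℝ) x, Real.exp (ε * u) * |ψ u| ≤ S) →
      ∀ u ∈ Set.Icc (0:ℝ) x, Real.exp (ε * u) * |ψ u| ≤ (1 + φ) / 2 * S + φ * D := by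
    intro x S hS hSb u hu
    have h1 : |∫ y in (0:ℝ)..u, ψ (u - y) * w y|
        ≤ ∫ y in (0:ℝ)..u, S * Real.exp (-ε * u) * (Real.exp (ε * y) * w y) := by
      rw [← Real.norm_eq_abs]
      refine intervalIntegral.norm_integral_le_of_norm_le hu.1 ?_ ?_
      · refine Eventually.of_forall (fun y hy => ?_)
        have h := hSb (u - y) ⟨by linarith [hy.2], by linarith [hy.1, hu.2]⟩
        have hwy := hwpos y hy.1
        rw [Real.norm_eq_abs, abs_mul, abs_of_pos hwy]
        have e : |ψ (u - y)| = Real.exp (-ε * u) * Real.exp (ε * y)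
            * (Real.exp (ε * (u - y)) * |ψ (u - y)|) := by
          rw [← mul_assoc, ← Real.exp_add, ← Real.exp_add]
          rw [show -ε * u + ε * y + ε * (u - y) = 0 by ring]; simp
        rw [e]
        calc Real.exp (-ε * u) * Real.exp (ε * y) * (Real.exp (ε * (u - y)) * |ψ (u - y)|) * w y
            ≤ Real.exp (-ε * u) * Real.exp (ε * y) * S * w y := by gcongr
          _ = _ := by ring
      · exact ((hwI u hu.1).continuousOn_mul (by fun_prop)).const_mul _
    rw [intervalIntegral.integral_const_mul] at h1
    have h2 := DecF.tail hC hδ hb hu.1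
    have h3 : Real.exp (-δ * u) ≤ Real.exp (-ε * u) := by
      apply Real.exp_le_exp.2; nlinarith [hu.1]
    have h4 : |ψ u| ≤ φ * (S * Real.exp (-ε * u) * (1 + θ * L) + D * Real.exp (-ε * u)) := by
      rw [hψ_eq u hu.1, abs_mul, abs_of_pos hφ0]
      refine mul_le_mul_of_nonneg_left ((abs_add_le _ _).trans (add_le_add ?_ ?_)) hφ0.le
      · exact h1.trans (mul_le_mul_of_nonneg_left (hmass u hu.1) (by positivity))
      · exact h2.trans (mul_le_mul_of_nonneg_left h3 hD)
    have e0 : Real.exp (ε * u) * Real.exp (-ε * u) = 1 := by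
      rw [← Real.exp_add]; simp
    calc Real.exp (ε * u) * |ψ u| ≤ Real.exp (ε * u) *
          (φ * (S * Real.exp (-ε * u) * (1 + θ * L) + D * Real.exp (-ε * u))) := by gcongr
      _ = (Real.exp (ε * u) * Real.exp (-ε * u)) * (φ * (S * (1 + θ * L) + D)) := by ring
      _ = φ * (1 + θ * L) * S + φ * D := by rw [e0]; ring
      _ ≤ _ := by
        gcongr
        have : φ * (θ * L) ≤ (1 - φ) / 2 := by nlinarith [mul_nonneg hθ0.le hL0]
        linarith
  refine ⟨φ * D / ((1 - φ) / 2), ε, by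
    apply div_nonneg (by positivity); linarith, hε0, fun u hu => ?_⟩
  -- supremum
  set x := u + 1
  have hx : 0 < x := by simp only [x]; linarith
  obtain ⟨M, hM⟩ := hψ_loc x hx
  set A := (fun u => Real.exp (ε * u) * |ψ u|) '' Set.Icc 0 x
  have hux : u ∈ Set.Icc (0:ℝ) x := ⟨hu, by simp only [x]; linarith⟩
  have hM0 : 0 ≤ M := (abs_nonneg _).trans (hM u hux)
  have hne : A.Nonempty := ⟨_, u, hux, rfl⟩
  have hbd : BddAbove A := by
    refine ⟨Real.exp (ε * x) * M, ?_⟩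
    rintro _ ⟨v, hv, rfl⟩
    have := hM v hv
    have := hv.2
    simp only
    gcongr
  have hS : ∀ v ∈ Set.Icc (0:ℝ) x, Real.exp (ε * v) * |ψ v| ≤ sSup A := fun v hv =>
    le_csSup hbd ⟨v, hv, rfl⟩
  have hS0 : 0 ≤ sSup A := le_trans (by positivity) (hS u hux)
  have hle : sSup A ≤ (1 + φ) / 2 * sSup A + φ * D := by
    refine csSup_le hne ?_
    rintro _ ⟨v, hv, rfl⟩
    exact hstep x _ hS0 hS v hv
  have hfin : sSup A ≤ φ * D / ((1 - φ) / 2) := by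
    rw [le_div_iff₀ (by linarith)]; linarith
  have h5 := (hS u hux).trans hfin
  have e0 : |ψ u| = (Real.exp (ε * u) * |ψ u|) * Real.exp (-ε * u) := by
    rw [mul_comm (Real.exp _), mul_assoc, ← Real.exp_add]; simp
  rw [e0]
  gcongr

lemma renewal_meas {w ψ : ℝ → ℝ} {φ : ℝ} (hw : DecF w) (hwpos : ∀ y, 0 < y → 0 < w y)
    (hψ_eq : ∀ u : ℝ, 0 ≤ u →
      ψ u = φ * ((∫ y in (0:ℝ)..u, ψ (u - y) * w y) + ∫ y in Set.Ioi u, w y)) (x : ℝ) :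
    AEStronglyMeasurable ψ (volume.restrict (Set.Ioc 0 x)) := by
  have hwi := hw.intOn
  by_contra hx
  have hx0 : 0 < x := by
    by_contra h
    apply hx
    rw [Set.Ioc_eq_empty h]; simp
  set S := {z : ℝ | 0 ≤ z ∧ z ≤ x ∧ AEStronglyMeasurable ψ (volume.restrict (Set.Ioc 0 z))}
  have h0S : (0:ℝ) ∈ S := ⟨le_rfl, hx0.le, by simp⟩
  have hbd : BddAbove S := ⟨x, fun z hz => hz.2.1⟩
  set c := sSup S
  have hc0 : 0 ≤ c := le_csSup hbd h0S
  have hcx : c ≤ x := csSup_le ⟨0, h0S⟩ (fun z hz => hz.2.1)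
  have hlt : ∀ z, z < c → AEStronglyMeasurable ψ (volume.restrict (Set.Ioc 0 z)) := by
    intro z hz
    obtain ⟨y, hy, hzy⟩ := exists_lt_of_lt_csSup ⟨0, h0S⟩ hz
    exact hy.2.2.mono_measure (Measure.restrict_mono (Set.Ioc_subset_Ioc_right hzy.le) le_rfl)
  have hc : AEStronglyMeasurable ψ (volume.restrict (Set.Ioc 0 c)) := by
    rw [← Measure.restrict_congr_set Ioo_ae_eq_Ioc]
    have e : Set.Ioo 0 c = ⋃ n : ℕ, Set.Ioc 0 (c - 1 / ((n : ℝ) + 1)) := by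
      ext z
      simp only [Set.mem_Ioo, Set.mem_iUnion, Set.mem_Ioc]
      constructor
      · rintro ⟨h1, h2⟩
        obtain ⟨n, hn⟩ := exists_nat_one_div_lt (sub_pos.2 h2)
        exact ⟨n, h1, by linarith⟩
      · rintro ⟨n, h1, h2⟩
        have : (0:ℝ) < 1 / ((n : ℝ) + 1) := by positivity
        exact ⟨h1, by linarith⟩
    rw [e, aestronglyMeasurable_iUnion_iff]
    intro n
    have : (0:ℝ) < 1 / ((n : ℝ) + 1) := by positivity
    exact hlt _ (by linarith)
  have hgt : ∀ u, c < u → u ≤ x → ψ u = φ * ∫ y in Set.Ioi u, w y := by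
    intro u hcu hux
    have hu0 : 0 ≤ u := hc0.trans hcu.le
    have hnot : ¬ AEStronglyMeasurable ψ (volume.restrict (Set.Ioc 0 u)) := fun h =>
      absurd (le_csSup hbd ⟨hu0, hux, h⟩) (not_le.2 hcu)
    have : ∫ y in (0:ℝ)..u, ψ (u - y) * w y = 0 := by
      apply intervalIntegral.integral_undef
      intro hI
      apply hnot
      have h1 := (hI.comp_sub_left u).symm
      simp only [sub_self, sub_zero, sub_sub_cancel] at h1
      rw [intervalIntegrable_iff_integrableOn_Ioc_of_le hu0] at h1
      have h2 := h1.aestronglyMeasurable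
      rw [← Measure.restrict_congr_set Ioo_ae_eq_Ioc] at h2 ⊢
      have hcont : ContinuousOn (fun y => (w (u - y))⁻¹) (Set.Ioo 0 u) := by
        refine ContinuousOn.inv₀ (hw.1.comp (by fun_prop) ?_) ?_
        · intro y hy; simpa using hy.2
        · intro y hy; exact (hwpos _ (by linarith [hy.2])).ne'
      refine (h2.mul (hcont.aestronglyMeasurable measurableSet_Ioo)).congr ?_
      refine (ae_restrict_mem measurableSet_Ioo).mono (fun y hy => ?_)
      have := (hwpos (u - y) (by linarith [hy.2])).ne'
      simp only [Pi.mul_apply]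
      field_simp
    rw [hψ_eq u hu0, this, zero_add]
  apply hx
  rw [← Set.Ioc_union_Ioc_eq_Ioc hc0 hcx, aestronglyMeasurable_union_iff]
  refine ⟨hc, ?_⟩
  have hT : ContinuousOn (fun u => φ * ∫ y in Set.Ioi u, w y) (Set.Ioc c x) :=
    continuousOn_const.mul ((tail_cont hwi).mono (fun z hz => hc0.trans hz.1.le))
  refine (hT.aestronglyMeasurable measurableSet_Ioc).congr ?_
  exact (ae_restrict_mem measurableSet_Ioc).mono (fun y hy => (hgt y hy.1 hy.2).symm)

theorem renewal_reg {f w ψ : ℝ → ℝ} {c φ : ℝ} (hφ0 : 0 < φ) (hφ1 : φ < 1)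
    (hf : ∀ n, EC n f) (hw : DecF w) (hwc : ContinuousOn w (Set.Ici 0))
    (hwd : ∀ u, 0 < u → HasDerivAt w (-c * f u) u)
    (hwpos : ∀ y, 0 < y → 0 < w y) (hw1 : ∀ u, 0 ≤ u → ∫ y in (0:ℝ)..u, w y ≤ 1)
    (hψ_loc : ∀ x : ℝ, 0 < x → ∃ M, ∀ u ∈ Set.Icc (0:ℝ) x, |ψ u| ≤ M)
    (hψ_eq : ∀ u : ℝ, 0 ≤ u →
      ψ u = φ * ((∫ y in (0:ℝ)..u, ψ (u - y) * w y) + ∫ y in Set.Ioi u, w y)) :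
    ContinuousOn ψ (Set.Ici 0) ∧ ∃ d1 d2 d3 d4 : ℝ → ℝ,
      (∀ x, 0 < x → HasDerivAt ψ (d1 x) x) ∧ (∀ x, 0 < x → HasDerivAt d1 (d2 x) x) ∧
      (∀ x, 0 < x → HasDerivAt d2 (d3 x) x) ∧ (∀ x, 0 < x → HasDerivAt d3 (d4 x) x) ∧
      ContinuousOn d4 (Set.Ioi 0) ∧
      (∃ M, ∀ x, 0 < x → |d2 x| ≤ M) ∧ (∃ M, ∀ x, 0 < x → |x * d3 x| ≤ M) ∧
      (∃ M, ∀ x, 0 < x → |x ^ 2 * d4 x| ≤ M) := by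
  have hwi := hw.intOn
  have hmeas := renewal_meas hw hwpos hψ_eq
  obtain ⟨C, ε, hC, hε, hdec⟩ := renewal_decay hφ0 hφ1 hw hwpos hw1 hψ_loc hψ_eq
  set fc : ℝ → ℝ := fun u => -c * f u with hfc
  have hfcE : ∀ n, EC n fc := fun n => (hf n).smul (-c)
  obtain ⟨K, hK0, hK⟩ := (hfcE 0).dec.bdd
  have heq : ∀ u, 0 ≤ u → ψ u = φ * (cnv w ψ u + ∫ y in Set.Ioi u, w y) := by
    intro u hu
    rw [cnv_comm]; exact hψ_eq u hu
  have hcnvc : ContinuousOn (cnv w ψ) (Set.Ici 0) := by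
    refine cnv_cont hwc hwd (hfcE 0).dec.1 hK (fun R _ => hmeas R) (fun R hR => ?_)
    obtain ⟨M, hM⟩ := hψ_loc R hR
    exact ⟨M, fun z hz hzR => hM z ⟨hz.le, hzR⟩⟩
  have hψc : ContinuousOn ψ (Set.Ici 0) :=
    (continuousOn_const.mul (hcnvc.add (tail_cont hwi))).congr (fun u hu => heq u hu)
  have hψD : DecF ψ := ⟨hψc.mono Set.Ioi_subset_Ici_self, C, ε, hC, hε, fun u hu => hdec u hu.le⟩
  obtain ⟨M, hM0, hM⟩ := hψD.bdd
  set d1 : ℝ → ℝ := fun u => φ * ((w 0 * ψ u + cnv fc ψ u) + (-1) * w u) with hd1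
  have D1 : ∀ x, 0 < x → HasDerivAt ψ (d1 x) x := by
    intro x hx
    have h1 := cnv_leib hwc hwd (hfcE 0).dec.1 hK hψD.1 hM hx
    have h2 := (h1.add (tail_deriv hwi hw.1 hx)).const_mul φ
    refine (h2.congr_of_eventuallyEq ?_).congr_deriv (by simp only [hd1]; ring)
    filter_upwards [lt_mem_nhds hx] with v hv
    exact heq v hv.le
  have hwE : ∀ n, EC n w := by
    intro n
    cases n with
    | zero => exact hw
    | succ n =>
      refine ⟨hw, _, (hfcE n).idmul, fun u hu => (hwd u hu).congr_deriv ?_⟩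
      simp only [hfc]; field_simp
  have hd1E : ∀ n, EC n ψ → EC n d1 := fun n h =>
    (((h.smul (w 0)).add ((hfcE n).cnv h)).add ((hwE n).smul (-1))).smul φ
  have hψE : ∀ n, EC n ψ := by
    intro n
    induction n with
    | zero => exact hψD
    | succ n ih =>
      refine ⟨hψD, _, (hd1E n ih).idmul, fun u hu => (D1 u hu).congr_deriv ?_⟩
      field_simp
  have hd1E' : ∀ n, EC n d1 := fun n => hd1E n (hψE n)
  obtain ⟨K1, hK10, hK1⟩ := (hd1E' 0).dec.bdd
  set d2 : ℝ → ℝ := fun u => φ * ((w 0 * d1 u + (ψ 0 * fc u + cnv d1 fc u)) + (-1) * fc u) with hd2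
  have D2 : ∀ x, 0 < x → HasDerivAt d1 (d2 x) x := by
    intro x hx
    have h1 := cnv_leib hψc D1 (hd1E' 0).dec.1 hK1 (hfcE 0).dec.1 hK hx
    have e : cnv fc ψ = cnv ψ fc := funext (cnv_comm fc ψ)
    rw [← e] at h1
    exact ((((D1 x hx).const_mul (w 0)).add h1).add ((hwd x hx).const_mul (-1))).const_mul φ
  have hd2E : EC 2 d2 :=
    ((((hd1E' 2).smul (w 0)).add (((hfcE 2).smul (ψ 0)).add ((hd1E' 2).cnv (hfcE 2)))).add
      ((hfcE 2).smul (-1))).smul φ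
  have hd2b := hd2E.dec.bdd
  obtain ⟨-, h, ⟨hhD, k, hkD, hk⟩, hh⟩ := hd2E
  have hkD' : DecF k := hkD
  obtain ⟨B1, -, hB1⟩ := hhD.bdd
  obtain ⟨B2, -, hB2⟩ := hkD'.bdd
  refine ⟨hψc, d1, d2, fun u => h u / u, fun u => (k u - h u) / u ^ 2, D1, D2, hh, ?_, ?_, ?_, ?_, ?_⟩
  · intro x hx
    refine ((hk x hx).div (hasDerivAt_id x) hx.ne').congr_deriv ?_
    simp only [id]
    field_simp
  · refine (hkD'.1.sub hhD.1).div (by fun_prop) (fun x hx => ?_)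
    exact pow_ne_zero 2 (ne_of_gt hx)
  · obtain ⟨M', -, hM'⟩ := hd2b
    exact ⟨M', hM'⟩
  · refine ⟨B1, fun x hx => ?_⟩
    rw [show x * (h x / x) = h x by field_simp]
    exact hB1 x hx
  · refine ⟨B2 + B1, fun x hx => ?_⟩
    rw [show x ^ 2 * ((k x - h x) / x ^ 2) = k x - h x by field_simp]
    exact (abs_sub _ _).trans (add_le_add (hB2 x hx) (hB1 x hx))

/-! ## Part E: gamma mixtures -/

lemma powexp_dec {b : ℝ} (hb : 0 < b) (m : ℕ) : DecF (fun u => u ^ m * Real.exp (-b * u)) := by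
  induction m with
  | zero =>
    refine ⟨by fun_prop, 1, b, zero_le_one, hb, fun u _ => ?_⟩
    simp [abs_of_pos (Real.exp_pos _)]
  | succ m ih =>
    refine ih.idmul.congr (fun u _ => ?_)
    ring

lemma kern_dec {a b : ℝ} (ha : 1 ≤ a) (hb : 0 < b) :
    DecF (fun u => u ^ (a - 1) * Real.exp (-b * u)) := by
  obtain ⟨m, hm⟩ := exists_nat_ge (a - 1)
  obtain ⟨-, C, ε, hC, hε, hB⟩ := (powexp_dec hb 0).add (powexp_dec hb m)
  refine ⟨?_, C, ε, hC, hε, fun u hu => ?_⟩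
  · refine ContinuousOn.mul ?_ (by fun_prop)
    exact continuousOn_id.rpow_const (fun x hx => Or.inr (by linarith))
  · refine le_trans ?_ (hB u hu)
    have h1 : 0 ≤ u ^ (a - 1) := Real.rpow_nonneg hu.le _
    have h3 : u ^ (a - 1) ≤ 1 + u ^ m := by
      rcases le_total u 1 with h | h
      · have := Real.rpow_le_one hu.le h (by linarith : 0 ≤ a - 1)
        have : 0 ≤ u ^ m := by positivity
        linarith
      · have := Real.rpow_le_rpow_of_exponent_le h hm
        rw [Real.rpow_natCast] at this
        linarith
    have e := Real.exp_pos (-b * u)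
    rw [abs_of_nonneg (by positivity), abs_of_nonneg (by positivity)]
    calc _ ≤ (1 + u ^ m) * Real.exp (-b * u) := mul_le_mul_of_nonneg_right h3 e.le
      _ = _ := by ring

lemma kern_EC {b : ℝ} (hb : 0 < b) (n : ℕ) : ∀ {a : ℝ}, 1 ≤ a →
    EC n (fun u => u ^ (a - 1) * Real.exp (-b * u)) := by
  induction n with
  | zero => intro a ha; exact kern_dec ha hb
  | succ n ih =>
    intro a ha
    refine ⟨kern_dec ha hb, _, ((ih ha).smul (a - 1)).add (((ih ha).idmul).smul (-b)), ?_⟩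
    intro u hu
    have h1 := Real.hasDerivAt_rpow_const (x := u) (p := a - 1) (Or.inl hu.ne')
    have h2 : HasDerivAt (fun u => Real.exp (-b * u)) (Real.exp (-b * u) * (-b * 1)) u :=
      ((hasDerivAt_id u).const_mul (-b)).exp
    refine (h1.mul h2).congr_deriv ?_
    rw [Real.rpow_sub_one hu.ne']
    field_simp

/-- gamma density -/
noncomputable def gd (a b y : ℝ) : ℝ := b ^ a * y ^ (a - 1) * Real.exp (-b * y) / Real.Gamma a

lemma gd_EC {a b : ℝ} (ha : 1 ≤ a) (hb : 0 < b) (n : ℕ) : EC n (gd a b) := by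
  refine ((kern_EC hb n ha).smul (b ^ a / Real.Gamma a)).congr (fun u _ => ?_)
  unfold gd; ring

lemma gd_pos {a b : ℝ} (ha : 1 ≤ a) (hb : 0 < b) {y : ℝ} (hy : 0 < y) : 0 < gd a b y := by
  have := Real.Gamma_pos_of_pos (by linarith : 0 < a)
  unfold gd; positivity

lemma gd_int {a b : ℝ} (ha : 1 ≤ a) (hb : 0 < b) : ∫ y in Set.Ioi (0:ℝ), gd a b y = 1 := by
  have hG := Real.Gamma_pos_of_pos (by linarith : 0 < a)
  have hba : 0 < b ^ a := Real.rpow_pos_of_pos hb a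
  have h := Real.integral_rpow_mul_exp_neg_mul_Ioi (by linarith : 0 < a) hb
  have e : ∀ y, gd a b y = b ^ a / Real.Gamma a * (y ^ (a - 1) * Real.exp (-(b * y))) := by
    intro y; unfold gd; rw [neg_mul]; ring
  simp_rw [e]
  rw [integral_const_mul, h, Real.div_rpow zero_le_one hb.le, Real.one_rpow]
  field_simp

lemma gd_mean {a b : ℝ} (ha : 1 ≤ a) (hb : 0 < b) :
    ∫ y in Set.Ioi (0:ℝ), y * gd a b y = a / b := by
  have hG := Real.Gamma_pos_of_pos (by linarith : 0 < a)
  have hG' := Real.Gamma_pos_of_pos (by linarith : 0 < a + 1)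
  have e : ∀ y ∈ Set.Ioi (0:ℝ), y * gd a b y = a / b * gd (a + 1) b y := by
    intro y hy
    have hy' : 0 < y := hy
    unfold gd
    rw [Real.Gamma_add_one (by linarith), Real.rpow_add_one hb.ne',
      show a + 1 - 1 = (a - 1) + 1 by ring, Real.rpow_add_one hy'.ne']
    field_simp
  rw [setIntegral_congr_fun measurableSet_Ioi e, integral_const_mul,
    gd_int (by linarith) hb, mul_one]

lemma tail_mean {f : ℝ → ℝ} (hf : DecF f) (hpos : ∀ y, 0 < y → 0 < f y) {u : ℝ} (hu : 0 ≤ u) :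
    ∫ y in (0:ℝ)..u, (∫ z in Set.Ioi y, f z) ≤ ∫ y in Set.Ioi (0:ℝ), y * f y := by
  have hi := hf.intOn
  have hi2 := hf.idmul.intOn
  have gc := tail_cont hi
  have ii : IntervalIntegrable (fun y => ∫ z in Set.Ioi y, f z) volume 0 u := by
    apply ContinuousOn.intervalIntegrable
    rw [Set.uIcc_of_le hu]
    exact gc.mono (fun z hz => hz.1)
  have i2 : IntervalIntegrable (fun y => y * f y) volume 0 u := by
    rw [intervalIntegrable_iff_integrableOn_Ioc_of_le hu]
    exact hi2.mono_set (fun z hz => hz.1)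
  have ft := intervalIntegral.integral_eq_sub_of_hasDerivAt_of_le hu
    (f := fun y => y * ∫ z in Set.Ioi y, f z) (f' := fun y => (∫ z in Set.Ioi y, f z) - y * f y)
    (continuousOn_id.mul (gc.mono (fun z hz => hz.1)))
    (fun x hx => ((hasDerivAt_id x).mul (tail_deriv hi hf.1 hx.1)).congr_deriv (by simp; ring))
    (ii.sub i2)
  rw [intervalIntegral.integral_sub ii i2] at ft
  have t := tail_eq hi2 hu
  have m : u * ∫ z in Set.Ioi u, f z ≤ ∫ z in Set.Ioi u, z * f z := by
    rw [← integral_const_mul]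
    refine setIntegral_mono_on ((hi.mono_set (Set.Ioi_subset_Ioi hu)).const_mul u)
      (hi2.mono_set (Set.Ioi_subset_Ioi hu)) measurableSet_Ioi (fun z hz => ?_)
    have hz' : u < z := hz
    exact mul_le_mul_of_nonneg_right hz'.le (hpos z (hu.trans_lt hz')).le
  simp only [zero_mul, sub_zero] at ft
  linarith

lemma tail_pos {f : ℝ → ℝ} (hf : DecF f) (hpos : ∀ y, 0 < y → 0 < f y) {u : ℝ} (hu : 0 ≤ u) :
    0 < ∫ y in Set.Ioi u, f y := by
  have hi := hf.intOn.mono_set (Set.Ioi_subset_Ioi hu)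
  rw [setIntegral_pos_iff_support_of_nonneg_ae ?_ hi]
  · have : Function.support f ∩ Set.Ioi u = Set.Ioi u := by
      apply Set.inter_eq_right.2
      intro z hz
      exact (hpos z (hu.trans_lt hz)).ne'
    rw [this]; simp
  · exact (ae_restrict_mem measurableSet_Ioi).mono (fun z hz => (hpos z (hu.trans_lt hz)).le)

lemma deriv_chain {g d1 d2 : ℝ → ℝ} (h0 : ∀ x, 0 < x → g x = d1 x)
    (h1 : ∀ x, 0 < x → HasDerivAt d1 (d2 x) x) : ∀ x, 0 < x → deriv g x = d2 x := by
  intro x hx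
  refine ((h1 x hx).congr_of_eventuallyEq ?_).deriv
  filter_upwards [lt_mem_nhds hx] with v hv using h0 v hv

lemma contDiff_chain {n : ℕ} {g d : ℝ → ℝ} (h : ∀ x, 0 < x → HasDerivAt g (d x) x)
    (hd : ContDiffOn ℝ n d (Set.Ioi 0)) : ContDiffOn ℝ (n + 1 : ℕ) g (Set.Ioi 0) := by
  push_cast
  rw [contDiffOn_succ_iff_deriv_of_isOpen isOpen_Ioi]
  refine ⟨fun x hx => (h x hx).differentiableAt.differentiableWithinAt, by simp, ?_⟩
  exact hd.congr (fun x hx => (h x hx).deriv)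

lemma sup_fin {g d : ℝ → ℝ} (e : ∀ x, 0 < x → g x = d x) (h : ∃ M, ∀ x, 0 < x → |d x| ≤ M) :
    (⨆ u ∈ Set.Ioi (0:ℝ), (‖g u‖₊ : ℝ≥0∞)) < ⊤ := by
  obtain ⟨M, hM⟩ := h
  refine lt_of_le_of_lt (iSup₂_le (a := ENNReal.ofReal M) (fun u hu => ?_)) ENNReal.ofReal_lt_top
  rw [← enorm_eq_nnnorm, ← ofReal_norm, e u hu]
  exact ENNReal.ofReal_le_ofReal (hM u hu)

lemma sup_pt {g d : ℝ → ℝ} (e : ∀ x, 0 < x → g x = d x)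
    (h : (⨆ u ∈ Set.Ioi (0:ℝ), (‖g u‖₊ : ℝ≥0∞)) < ⊤) {x : ℝ} (hx : 0 < x) :
    |d x| ≤ (⨆ u ∈ Set.Ioi (0:ℝ), (‖g u‖₊ : ℝ≥0∞)).toReal := by
  have h1 : (‖g x‖₊ : ℝ≥0∞) ≤ ⨆ u ∈ Set.Ioi (0:ℝ), (‖g u‖₊ : ℝ≥0∞) :=
    le_iSup₂ (f := fun u (_ : u ∈ Set.Ioi (0:ℝ)) => (‖g u‖₊ : ℝ≥0∞)) x hx
  have := ENNReal.toReal_mono h.ne h1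
  rw [← e x hx]
  simpa using this

lemma mul_toReal {S : ℝ≥0∞} (hS : S < ⊤) {c : ℝ} (hc : 0 ≤ c) :
    ENNReal.ofReal c * S = ENNReal.ofReal (c * S.toReal) := by
  rw [ENNReal.ofReal_mul hc, ENNReal.ofReal_toReal hS.ne]

/-- in the classical risk model whose claim amounts are a finite
mixture of `Gamma(αᵢ, βᵢ)` distributions with `αᵢ ≥ 1`, the ruin probability `ψ`
(the locally bounded solution of its defective renewal equation) belongs to `D₁`:
it is continuous on `[0,∞)`, four times continuously differentiable on `(0,∞)`,
with `‖ψ''‖, ‖u ψ'''(u)‖, ‖u² ψ⁗(u)‖ < ∞`; consequently for every `t > 0`,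
`sup_{u≥0} |M_t^{[2]} ψ(u) - ψ(u)| ≤ ‖ψ''‖/(8t²) + ‖u ψ'''(u)‖/(6t²)
 + 9 ‖u² ψ⁗(u)‖/(16t²) < ∞`. -/
theorem stmt_16 (n : ℕ) (hn : 0 < n) (p a b : Fin n → ℝ)
    (hp : ∀ i, 0 < p i) (hsum : ∑ i, p i = 1)
    (ha : ∀ i, 1 ≤ a i) (hb : ∀ i, 0 < b i)
    (φ : ℝ) (hφ0 : 0 < φ) (hφ1 : φ < 1)
    (F_X : ℝ → ℝ) (hFX : ∀ u : ℝ, F_X u = ∑ i, p i * gammaCDF (a i) (b i) u)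
    (μ : ℝ) (hμ : μ = ∑ i, p i * a i / b i)
    (ψ : ℝ → ℝ)
    (hψ_loc : ∀ x : ℝ, 0 < x → ∃ M, ∀ u ∈ Set.Icc (0:ℝ) x, |ψ u| ≤ M)
    (hψ_eq : ∀ u : ℝ, 0 ≤ u →
      ψ u = φ * ((∫ y in (0:ℝ)..u, ψ (u - y) * ((1 - F_X y) / μ))
        + ∫ y in Set.Ioi u, (1 - F_X y) / μ)) :
    ContinuousOn ψ (Set.Ici 0) ∧
    ContDiffOn ℝ 4 ψ (Set.Ioi 0) ∧
    (⨆ u ∈ Set.Ioi (0:ℝ), (‖iteratedDeriv 2 ψ u‖₊ : ℝ≥0∞)) < ⊤ ∧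
    (⨆ u ∈ Set.Ioi (0:ℝ), (‖u * iteratedDeriv 3 ψ u‖₊ : ℝ≥0∞)) < ⊤ ∧
    (⨆ u ∈ Set.Ioi (0:ℝ), (‖u ^ 2 * iteratedDeriv 4 ψ u‖₊ : ℝ≥0∞)) < ⊤ ∧
    ∀ t : ℝ, 0 < t →
      ∀ B : ℝ≥0∞,
        B = ENNReal.ofReal (1 / (8 * t ^ 2))
              * (⨆ u ∈ Set.Ioi (0:ℝ), (‖iteratedDeriv 2 ψ u‖₊ : ℝ≥0∞))
            + ENNReal.ofReal (1 / (6 * t ^ 2))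
              * (⨆ u ∈ Set.Ioi (0:ℝ), (‖u * iteratedDeriv 3 ψ u‖₊ : ℝ≥0∞))
            + ENNReal.ofReal (9 / (16 * t ^ 2))
              * (⨆ u ∈ Set.Ioi (0:ℝ), (‖u ^ 2 * iteratedDeriv 4 ψ u‖₊ : ℝ≥0∞)) →
        (⨆ u ∈ Set.Ici (0:ℝ), (‖Mt2 t ψ u - ψ u‖₊ : ℝ≥0∞)) ≤ B ∧ B < ⊤ := by
  set f : ℝ → ℝ := fun y => ∑ i, p i * gd (a i) (b i) y with hf
  have hfE : ∀ m, EC m f := fun m =>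
    EC.sum Finset.univ (fun i _ => (gd_EC (ha i) (hb i) m).smul (p i)) (EC.zero m)
  have hfD : DecF f := (hfE 0).dec
  have hne : (Finset.univ : Finset (Fin n)).Nonempty := ⟨⟨0, hn⟩, Finset.mem_univ _⟩
  have hfpos : ∀ y, 0 < y → 0 < f y := fun y hy =>
    Finset.sum_pos (fun i _ => mul_pos (hp i) (gd_pos (ha i) (hb i) hy)) hne
  have hμ0 : 0 < μ := by
    rw [hμ]
    exact Finset.sum_pos (fun i _ => div_pos (mul_pos (hp i) (by linarith [ha i])) (hb i)) hne
  have hmean : ∫ y in Set.Ioi (0:ℝ), y * f y = μ := by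
    have e : ∀ y, y * f y = ∑ i, p i * (y * gd (a i) (b i) y) := by
      intro y
      simp only [hf, Finset.mul_sum]
      exact Finset.sum_congr rfl (fun i _ => by ring)
    simp_rw [e]
    rw [integral_finsetSum, hμ]
    · refine Finset.sum_congr rfl (fun i _ => ?_)
      rw [integral_const_mul, gd_mean (ha i) (hb i)]; ring
    · intro i _
      exact (gd_EC (ha i) (hb i) 0).dec.idmul.intOn.const_mul (p i)
  have hGF : ∀ u, 0 ≤ u → 1 - F_X u = ∫ y in Set.Ioi u, f y := by
    intro u hu
    have e : ∫ y in Set.Ioi u, f y = ∑ i, p i * ∫ y in Set.Ioi u, gd (a i) (b i) y := by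
      simp only [hf]
      rw [integral_finsetSum]
      · exact Finset.sum_congr rfl (fun i _ => integral_const_mul _ _)
      · intro i _
        exact ((gd_EC (ha i) (hb i) 0).dec.intOn.mono_set (Set.Ioi_subset_Ioi hu)).const_mul (p i)
    rw [e, hFX, ← hsum, ← Finset.sum_sub_distrib]
    refine Finset.sum_congr rfl (fun i _ => ?_)
    rw [tail_eq (gd_EC (ha i) (hb i) 0).dec.intOn hu, gd_int (ha i) (hb i)]
    unfold gammaCDF gd
    ring
  set w : ℝ → ℝ := fun y => (1 - F_X y) / μ with hw
  have hwG : ∀ u, 0 ≤ u → w u = (∫ y in Set.Ioi u, f y) / μ := by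
    intro u hu; simp only [hw]; rw [hGF u hu]
  have hwc : ContinuousOn w (Set.Ici 0) :=
    ((tail_cont hfD.intOn).div_const μ).congr (fun u hu => hwG u hu)
  have hwD : DecF w := by
    obtain ⟨-, C, ε, hC, hε, hB⟩ := hfD
    refine ⟨hwc.mono Set.Ioi_subset_Ici_self, C / ε / μ, ε, by positivity, hε, fun u hu => ?_⟩
    rw [hwG u hu.le, abs_div, abs_of_pos hμ0, div_mul_eq_mul_div]
    have := DecF.tail hC hε hB hu.le
    gcongr
  have hwd : ∀ u, 0 < u → HasDerivAt w (-(1 / μ) * f u) u := by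
    intro u hu
    refine (((tail_deriv hfD.intOn hfD.1 hu).div_const μ).congr_of_eventuallyEq ?_).congr_deriv
      (by ring)
    filter_upwards [lt_mem_nhds hu] with v hv using hwG v hv.le
  have hwpos : ∀ y, 0 < y → 0 < w y := by
    intro y hy
    rw [hwG y hy.le]
    exact div_pos (tail_pos hfD hfpos hy.le) hμ0
  have hw1 : ∀ u, 0 ≤ u → ∫ y in (0:ℝ)..u, w y ≤ 1 := by
    intro u hu
    have e : ∫ y in (0:ℝ)..u, w y = ∫ y in (0:ℝ)..u, (∫ z in Set.Ioi y, f z) / μ := by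
      refine intervalIntegral.integral_congr (fun y hy => ?_)
      rw [Set.uIcc_of_le hu] at hy
      exact hwG y hy.1
    rw [e, intervalIntegral.integral_div, div_le_one hμ0]
    have := tail_mean hfD hfpos hu
    rwa [hmean] at this
  obtain ⟨hψc, d1, d2, d3, d4, D1, D2, D3, D4, c4, b2, b3, b4⟩ :=
    renewal_reg hφ0 hφ1 hfE hwD hwc hwd hwpos hw1 hψ_loc hψ_eq
  have e1 : ∀ x, 0 < x → iteratedDeriv 1 ψ x = d1 x := by
    intro x hx; rw [iteratedDeriv_one]; exact (D1 x hx).deriv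
  have e2 : ∀ x, 0 < x → iteratedDeriv 2 ψ x = d2 x := by
    intro x hx; rw [iteratedDeriv_succ]; exact deriv_chain e1 D2 x hx
  have e3 : ∀ x, 0 < x → iteratedDeriv 3 ψ x = d3 x := by
    intro x hx; rw [iteratedDeriv_succ]; exact deriv_chain e2 D3 x hx
  have e4 : ∀ x, 0 < x → iteratedDeriv 4 ψ x = d4 x := by
    intro x hx; rw [iteratedDeriv_succ]; exact deriv_chain e3 D4 x hx
  have e3x : ∀ x, 0 < x → x * iteratedDeriv 3 ψ x = x * d3 x := fun x hx => by rw [e3 x hx]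
  have e4x : ∀ x, 0 < x → x ^ 2 * iteratedDeriv 4 ψ x = x ^ 2 * d4 x := fun x hx => by rw [e4 x hx]
  have S2 := sup_fin e2 b2
  have S3 := sup_fin e3x b3
  have S4 := sup_fin e4x b4
  have c0 : ContDiffOn ℝ (0 : ℕ) d4 (Set.Ioi 0) := by
    simpa using (contDiffOn_zero (𝕜 := ℝ)).2 c4
  have cd := contDiff_chain D1 (contDiff_chain D2 (contDiff_chain D3 (contDiff_chain D4 c0)))
  refine ⟨hψc, by simpa using cd, S2, S3, S4, ?_⟩
  intro t ht B hB
  have q2 : 0 ≤ 1 / (8 * t ^ 2) := by positivity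
  have q3 : 0 ≤ 1 / (6 * t ^ 2) := by positivity
  have q4 : 0 ≤ 9 / (16 * t ^ 2) := by positivity
  rw [mul_toReal S2 q2, mul_toReal S3 q3, mul_toReal S4 q4,
    ← ENNReal.ofReal_add (by positivity) (by positivity),
    ← ENNReal.ofReal_add (by positivity) (by positivity)] at hB
  rw [hB]
  refine ⟨iSup₂_le (fun u hu => ?_), ENNReal.ofReal_lt_top⟩
  rw [← enorm_eq_nnnorm, ← ofReal_norm]
  apply ENNReal.ofReal_le_ofReal
  have := Mt2_bound ht hψc D1 D2 D3 D4 (fun x hx => sup_pt e2 S2 hx)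
    (fun x hx => sup_pt e3x S3 hx) (fun x hx => sup_pt e4x S4 hx) u hu
  rw [Real.norm_eq_abs]
  refine this.trans (le_of_eq ?_)
  ring
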